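/- Let 0 < R₁ < R₂, n ≥ 3. Among all domains D = B₂' ∖ closure(B₁) in ℝⁿ, where B₁ is a fixed open ball of radius R₁ and B₂' is an open ball of radius R₂ containing closure(B₁), the first eigenvalue τ₁(D) of the mixed Steklov–Dirichlet problem (Δu = 0 in D, u = 0 on ∂B₁, ∂u/∂ν = τu on ∂B₂') is maximized precisely when B₁ and B₂' are concentric, i.e., τ₁(D) ≤ τ₁(Ω₀) with equality iff D equals the concentric annulus Ω₀. -/

import Mathlib

open MeasureTheory Metric

/-- The domain `B(c,R₂) \ closure B(0,R₁)`. -/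
def stekDom (n : ℕ) (R₁ R₂ : ℝ) (c : EuclideanSpace ℝ (Fin n)) : Set (EuclideanSpace ℝ (Fin n)) :=
  Metric.ball c R₂ \ closure (Metric.ball (0 : EuclideanSpace ℝ (Fin n)) R₁)

/-- Variational characterization of the first mixed Steklov–Dirichlet eigenvalue of
`B(c,R₂) \ closure B(0,R₁)`: the infimum of Rayleigh quotients
`(∫_D ‖∇u‖²) / (∫_{∂B(c,R₂)} u²)` over smooth functions vanishing on `∂B(0,R₁)`
with nonzero boundary term. -/
noncomputable def tau1 (n : ℕ) (R₁ R₂ : ℝ) (c : EuclideanSpace ℝ (Fin n)) : ℝ :=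
  sInf { t : ℝ | ∃ u : EuclideanSpace ℝ (Fin n) → ℝ, ContDiff ℝ (⊤ : ℕ∞) u ∧
      (∀ p ∈ Metric.sphere (0 : EuclideanSpace ℝ (Fin n)) R₁, u p = 0) ∧
      (0 < ∫ p in Metric.sphere c R₂, (u p)^2 ∂(μH[((n:ℝ) - 1)])) ∧
      t = (∫ x in stekDom n R₁ R₂ c, ‖gradient u x‖^2) /
            (∫ p in Metric.sphere c R₂, (u p)^2 ∂(μH[((n:ℝ) - 1)])) }

/-! With `d = n - 1` and `φ r = ∫ t in R₁..r, (t ^ d)⁻¹`, the function `x ↦ φ ‖x‖` is harmonic away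
from the origin and vanishes on `‖x‖ = R₁`. On the concentric annulus it realises the infimum: for
any other competitor, apply Cauchy–Schwarz along each ray. On the eccentric domain it serves as a
test function. Its energy density `(‖x‖ ^ (2 * d))⁻¹` is strictly decreasing in `‖x‖`, so moving the
outer ball off centre, at constant volume, strictly lowers the energy. The boundary term does not
decrease: the mean of `φ ‖·‖` over `sphere c R₂` is still `φ R₂`, and Jensen's inequality applies to
its square. That mean is a mean value property in disguise: for a unit vector `θ`, the points
`c + R₂ • θ` and `(R₂ / ‖c‖) • c + ‖c‖ • θ` have the same norm, and the latter run over a sphere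
bounding a ball on which `φ ‖·‖` is harmonic.

The Hausdorff measure of a sphere need not be computed. Like the surface measure coming from polar
coordinates it gives all balls of equal radius the same mass, and two such finite measures are
proportional, as one sees by computing `(μ × ν) {(x, y) ∈ U × U | dist x y < r}` in both orders. -/

open Set Topology Module
open scoped Pointwise ContDiff InnerProductSpace Laplacian

local notation "dim" => finrank ℝ

section UniformlyDistributed

variable {X : Type*} [PseudoMetricSpace X] [SecondCountableTopology X] [MeasurableSpace X]
  [OpensMeasurableSpace X]

lemma setLIntegral_measure_inter_ball_comm (μ ν : Measure X) [SFinite μ] [SFinite ν] (U : Set X)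
    (r : ℝ) :
    ∫⁻ x in U, ν (U ∩ ball x r) ∂μ = ∫⁻ y in U, μ (U ∩ ball y r) ∂ν := by
  have hW : MeasurableSet {p : X × X | dist p.1 p.2 < r} :=
    measurableSet_lt (by fun_prop) (by fun_prop)
  calc ∫⁻ x in U, ν (U ∩ ball x r) ∂μ
      = ((μ.restrict U).prod (ν.restrict U)) {p | dist p.1 p.2 < r} := by
        simp only [Measure.prod_apply hW, ball, preimage_ofPred_eq, dist_comm]
        refine lintegral_congr fun x => ?_
        rw [Measure.restrict_apply (measurableSet_lt (by fun_prop) (by fun_prop)), inter_comm]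
    _ = ∫⁻ y in U, μ (U ∩ ball y r) ∂ν := by
        simp only [Measure.prod_apply_symm hW, ball, preimage_ofPred_eq]
        refine lintegral_congr fun x => ?_
        rw [Measure.restrict_apply (measurableSet_lt (by fun_prop) (by fun_prop)), inter_comm]

/-- A measure is uniformly distributed if the measure of a ball depends on its radius only. -/
def IsUniformlyDistributed {X : Type*} [PseudoMetricSpace X] [MeasurableSpace X]
    (μ : Measure X) : Prop :=
  ∀ x y r, μ (ball x r) = μ (ball y r)

namespace IsUniformlyDistributed

variable {μ ν : Measure X}

omit [OpensMeasurableSpace X] in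
lemma measure_ball_pos (hμ : IsUniformlyDistributed μ) (h0 : μ ≠ 0) (x : X) {r : ℝ} (hr : 0 < r) :
    0 < μ (ball x r) := by
  obtain ⟨y, -, hy⟩ := exists_mem_forall_mem_nhdsWithin_pos_measure
    (s := univ) (Measure.measure_univ_ne_zero.2 h0)
  rw [hμ x y r]
  exact hy _ (mem_nhdsWithin_of_mem_nhds (ball_mem_nhds y hr))

lemma measure_ball_mul_measure_univ (hμ : IsUniformlyDistributed μ)
    (hν : IsUniformlyDistributed ν) [SFinite μ] [SFinite ν] (x : X) (r : ℝ) :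
    ν (ball x r) * μ univ = μ (ball x r) * ν univ := by
  simpa [hν _ x, hμ _ x] using setLIntegral_measure_inter_ball_comm μ ν univ r

lemma measure_univ_mul_measure_compl_thickening_le (hμ : IsUniformlyDistributed μ)
    (hν : IsUniformlyDistributed ν) [SFinite μ] [IsFiniteMeasure ν] (U : Set X)
    {r : ℝ} (hr : 0 < r) :
    ν univ * μ (thickening r Uᶜ)ᶜ ≤ μ univ * ν U := by
  rcases eq_or_ne ν 0 with rfl | hν0
  · simp
  rcases (thickening r Uᶜ)ᶜ.eq_empty_or_nonempty with hempty | ⟨z, -⟩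
  · simp [hempty]
  set V := (thickening r Uᶜ)ᶜ
  have hVU : V ⊆ U := compl_subset_comm.1 (self_subset_thickening hr _)
  have hball : ∀ x ∈ V, U ∩ ball x r = ball x r := fun x hx =>
    inter_eq_right.2 fun y hy => by_contra fun hyU =>
      hx (mem_thickening_iff.2 ⟨y, hyU, by rwa [dist_comm]⟩)
  have hdouble : ν (ball z r) * μ V ≤ μ (ball z r) * ν U := calc
    ν (ball z r) * μ V = ∫⁻ x in V, ν (U ∩ ball x r) ∂μ := by
      rw [← setLIntegral_const]
      exact setLIntegral_congr_fun isOpen_thickening.measurableSet.compl fun x hx => by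
        rw [hball x hx, hν x z]
    _ ≤ ∫⁻ x in U, ν (U ∩ ball x r) ∂μ := lintegral_mono_set hVU
    _ = ∫⁻ y in U, μ (U ∩ ball y r) ∂ν :=
      setLIntegral_measure_inter_ball_comm μ ν U r
    _ ≤ ∫⁻ _ in U, μ (ball z r) ∂ν :=
      lintegral_mono fun y => (measure_mono inter_subset_right).trans_eq (hμ y z r)
    _ = μ (ball z r) * ν U := setLIntegral_const _ _
  refine (ENNReal.mul_le_mul_iff_right (hν.measure_ball_pos hν0 z hr).ne'
    (measure_ne_top ν _)).1 ?_
  calc ν (ball z r) * (ν univ * μ V) = ν univ * (ν (ball z r) * μ V) := by ring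
    _ ≤ ν univ * (μ (ball z r) * ν U) := by gcongr
    _ = (μ (ball z r) * ν univ) * ν U := by ring
    _ = ν (ball z r) * (μ univ * ν U) := by
      rw [← hμ.measure_ball_mul_measure_univ hν, mul_assoc]

lemma measure_univ_mul_measure_le (hμ : IsUniformlyDistributed μ)
    (hν : IsUniformlyDistributed ν) [SFinite μ] [IsFiniteMeasure ν] {U : Set X} (hU : IsOpen U) :
    ν univ * μ U ≤ μ univ * ν U := by
  let V : ℕ → Set X := fun k => (thickening (1 / ((k : ℝ) + 1)) Uᶜ)ᶜ
  have hVmono : Monotone V := fun k l hkl =>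
    compl_subset_compl.2 (thickening_mono (Nat.one_div_le_one_div hkl) _)
  have hVU : ⋃ k, V k = U := by
    have hclosure := closure_eq_iInter_thickening' Uᶜ (range fun k : ℕ => 1 / ((k : ℝ) + 1))
      (range_subset_iff.2 fun k => mem_Ioi.2 Nat.one_div_pos_of_nat) fun ε hε => by
        obtain ⟨k, hk⟩ := exists_nat_one_div_lt hε
        exact ⟨_, mem_range_self k, Nat.one_div_pos_of_nat, hk.le⟩
    rw [hU.isClosed_compl.closure_eq, biInter_range] at hclosure
    rw [← compl_iInter, ← hclosure, compl_compl]
  rw [← hVU, hVmono.measure_iUnion, ENNReal.mul_iSup, hVU]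
  exact iSup_le fun k =>
    hμ.measure_univ_mul_measure_compl_thickening_le hν U Nat.one_div_pos_of_nat

theorem measure_univ_smul_comm [BorelSpace X] (hμ : IsUniformlyDistributed μ)
    (hν : IsUniformlyDistributed ν) [IsFiniteMeasure μ] [IsFiniteMeasure ν] :
    ν univ • μ = μ univ • ν := by
  have : IsFiniteMeasure (ν univ • μ) := μ.smul_finite (measure_ne_top ν _)
  refine ext_of_generate_finite {s | IsOpen s} BorelSpace.measurable_eq isPiSystem_isOpen
    (fun U hU => ?_) (mul_comm _ _)
  exact le_antisymm (hμ.measure_univ_mul_measure_le hν hU) (hν.measure_univ_mul_measure_le hμ hU)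

omit [SecondCountableTopology X] [OpensMeasurableSpace X] in
lemma isFiniteMeasure [CompactSpace X] (hμ : IsUniformlyDistributed μ) {x : X} {r : ℝ}
    (hr : 0 < r) (hfin : μ (ball x r) < ⊤) : IsFiniteMeasure μ :=
  have : IsLocallyFiniteMeasure μ :=
    ⟨fun y => ⟨ball y r, ball_mem_nhds y hr, (hμ y x r).trans_lt hfin⟩⟩
  inferInstance

end IsUniformlyDistributed

end UniformlyDistributed

section HemisphereGraph

variable {E : Type*} [NormedAddCommGroup E] [InnerProductSpace ℝ E]

/-- The open hemisphere of the unit sphere centred at a unit vector `v`, as a graph over the unit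
ball of the hyperplane `vᗮ`. -/
noncomputable def hemisphereGraph (v : E) (w : (ℝ ∙ v)ᗮ) : E := w + √(1 - ‖w‖ ^ 2) • v

variable {v : E}

lemma norm_hemisphereGraph (hv : ‖v‖ = 1) {w : (ℝ ∙ v)ᗮ} (hw : ‖w‖ ≤ 1) :
    ‖hemisphereGraph v w‖ = 1 := by
  have horth : inner ℝ (w : E) v = 0 := Submodule.mem_orthogonal_singleton_iff_inner_left.1 w.2
  have hsq : ‖hemisphereGraph v w‖ ^ 2 = 1 := by
    rw [hemisphereGraph, norm_add_sq_real, inner_smul_right, horth, norm_smul, hv, mul_one,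
      Real.norm_of_nonneg (Real.sqrt_nonneg _), Real.sq_sqrt (by nlinarith [norm_nonneg w])]
    simp
  exact (pow_eq_one_iff_of_nonneg (norm_nonneg _) two_ne_zero).1 hsq

lemma orthogonalProjectionOnto_hemisphereGraph (w : (ℝ ∙ v)ᗮ) :
    (ℝ ∙ v)ᗮ.orthogonalProjectionOnto (hemisphereGraph v w) = w := by
  simp [hemisphereGraph, Submodule.orthogonalProjectionOnto_orthogonalComplement_singleton_eq_zero]

lemma hemisphereGraph_orthogonalProjectionOnto (hv : ‖v‖ = 1) {p : E} (hp : ‖p‖ = 1)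
    (hpv : 0 ≤ inner ℝ v p) :
    hemisphereGraph v ((ℝ ∙ v)ᗮ.orthogonalProjectionOnto p) = p := by
  have hproj : ((ℝ ∙ v)ᗮ.orthogonalProjectionOnto p : E) = p - inner ℝ v p • v := by
    rw [← Submodule.starProjection_apply, Submodule.starProjection_orthogonal_val,
      Submodule.starProjection_unit_singleton ℝ hv]
  have hnorm : ‖(ℝ ∙ v)ᗮ.orthogonalProjectionOnto p‖ ^ 2 = 1 - inner ℝ v p ^ 2 := by
    rw [← Submodule.norm_coe, hproj, norm_sub_sq_real, inner_smul_right, norm_smul, hv, hp,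
      real_inner_comm, Real.norm_eq_abs, mul_one, sq_abs]
    ring
  rw [hemisphereGraph, hnorm, sub_sub_cancel, Real.sqrt_sq hpv, hproj, sub_add_cancel]

lemma contDiffAt_hemisphereGraph_zero (v : E) : ContDiffAt ℝ 1 (hemisphereGraph v) 0 := by
  have hsqrt : ContDiffAt ℝ 1 (fun w : (ℝ ∙ v)ᗮ => √(1 - ‖w‖ ^ 2)) 0 :=
    (contDiffAt_const.sub (contDiff_norm_sq ℝ).contDiffAt).sqrt (by simp)
  exact ((ℝ ∙ v)ᗮ.subtypeL.contDiff.contDiffAt).add (hsqrt.smul contDiffAt_const)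

end HemisphereGraph

section SphereMeasure

variable {E : Type*} [NormedAddCommGroup E] [InnerProductSpace ℝ E]

lemma exists_linearIsometryEquiv_image_ball_inter_sphere (x y : sphere (0 : E) 1) (r : ℝ) :
    ∃ L : E ≃ₗᵢ[ℝ] E,
      L '' (ball (x : E) r ∩ sphere (0 : E) 1) = ball (y : E) r ∩ sphere (0 : E) 1 := by
  obtain ⟨L, hL⟩ : ∃ L : E ≃ₗᵢ[ℝ] E, L x = y := ⟨_, Submodule.reflection_sub (by simp)⟩
  refine ⟨L, ?_⟩
  rw [image_inter L.injective, L.image_ball, hL, L.image_sphere, map_zero]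

variable [MeasurableSpace E] [BorelSpace E]

lemma isUniformlyDistributed_hausdorffMeasure_sphere {s : ℝ} (hs : 0 ≤ s) :
    IsUniformlyDistributed (μH[s] : Measure (sphere (0 : E) 1)) := by
  intro x y r
  obtain ⟨L, hL⟩ := exists_linearIsometryEquiv_image_ball_inter_sphere x y r
  have hcoe := isometry_subtype_coe (s := sphere (0 : E) 1)
  rw [← hcoe.hausdorffMeasure_image (.inl hs),
    ← hcoe.hausdorffMeasure_image (.inl hs), Subtype.image_ball,
    Subtype.image_ball, ofPred_mem_eq, ← hL, L.isometry.hausdorffMeasure_image (.inl hs)]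

lemma map_add_smul_hausdorffMeasure_sphere {s : ℝ} (hs : 0 ≤ s) (c : E) {R : ℝ} (hR : 0 < R) :
    (μH[s] : Measure (sphere (0 : E) 1)).map (fun θ : sphere (0 : E) 1 => c + R • (θ : E)) =
      ‖R‖₊⁻¹ ^ s • (μH[s] : Measure E).restrict (sphere c R) := by
  have hiso : Isometry fun θ : sphere (0 : E) 1 => c + θ :=
    (IsometryEquiv.addLeft c).isometry.comp isometry_subtype_coe
  have hrange : range (fun θ : sphere (0 : E) 1 => c + θ) =
      AffineMap.homothety c R ⁻¹' sphere c R := by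
    ext z
    rw [mem_preimage, mem_sphere, dist_homothety_center, Real.norm_of_nonneg hR.le,
      mul_eq_left₀ hR.ne', dist_comm, dist_eq_norm]
    exact ⟨fun ⟨θ, hθ⟩ => by simp [← hθ],
      fun hz => ⟨⟨z - c, mem_sphere_zero_iff_norm.2 hz⟩, add_sub_cancel _ _⟩⟩
  have hcomp : (fun θ : sphere (0 : E) 1 => c + R • (θ : E)) =
      AffineMap.homothety c R ∘ fun θ : sphere (0 : E) 1 => c + (θ : E) := by
    ext θ
    simp [AffineMap.homothety_apply, add_comm]
  have hmeas : Measurable (AffineMap.homothety c R : E → E) :=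
    (AffineMap.homothety_continuous c R).measurable
  rw [hcomp, ← Measure.map_map hmeas hiso.continuous.measurable,
    hiso.map_hausdorffMeasure (.inl hs), hrange,
    ← Measure.restrict_map hmeas isClosed_sphere.measurableSet,
    map_homothety_hausdorffMeasure hs c hR.ne', Measure.restrict_smul]

variable [FiniteDimensional ℝ E]

lemma isUniformlyDistributed_toSphere :
    IsUniformlyDistributed (volume : Measure E).toSphere := by
  intro x y r
  obtain ⟨L, hL⟩ := exists_linearIsometryEquiv_image_ball_inter_sphere x y r
  rw [Measure.toSphere_apply' _ measurableSet_ball, Measure.toSphere_apply' _ measurableSet_ball,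
    Subtype.image_ball, Subtype.image_ball, ofPred_mem_eq, ← hL]
  have hsector : L '' (Ioo (0 : ℝ) 1 • (ball (x : E) r ∩ sphere (0 : E) 1)) =
      Ioo (0 : ℝ) 1 • L '' (ball (x : E) r ∩ sphere (0 : E) 1) :=
    image_image2_distrib_right fun a z => map_smul L a z
  rw [← hsector, L.image_eq_preimage_symm,
    L.symm.measurePreserving.measure_preimage_emb L.symm.toHomeomorph.measurableEmbedding]

variable [Nontrivial E]

lemma isAddHaarMeasure_hausdorffMeasure_orthogonal_singleton {v : E} (hv : v ≠ 0) :
    (μH[(dim E - 1 : ℕ)] : Measure (ℝ ∙ v)ᗮ).IsAddHaarMeasure := by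
  have : Fact (dim E = dim E - 1 + 1) := ⟨(Nat.sub_add_cancel finrank_pos).symm⟩
  have hfinrank : dim (ℝ ∙ v)ᗮ = dim E - 1 := Submodule.finrank_orthogonal_span_singleton hv
  exact hfinrank ▸ isAddHaarMeasure_hausdorffMeasure

instance neZero_toSphere (μ : Measure E) [μ.IsAddHaarMeasure] : NeZero μ.toSphere :=
  ⟨μ.toSphere_ne_zero⟩

instance neZero_hausdorffMeasure_sphere :
    NeZero (μH[(dim E - 1 : ℕ)] : Measure (sphere (0 : E) 1)) := by
  obtain ⟨v, hv⟩ := exists_norm_eq E zero_le_one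
  have hv0 : v ≠ 0 := by rintro rfl; simp at hv
  have := isAddHaarMeasure_hausdorffMeasure_orthogonal_singleton hv0
  have hproj : ball (0 : (ℝ ∙ v)ᗮ) 1 ⊆ (ℝ ∙ v)ᗮ.orthogonalProjectionOnto '' sphere 0 1 :=
    fun w hw => ⟨hemisphereGraph v w, by
      simpa using norm_hemisphereGraph hv (mem_ball_zero_iff.1 hw).le,
      orthogonalProjectionOnto_hemisphereGraph w⟩
  have hcoe := isometry_subtype_coe (s := sphere (0 : E) 1)
  rw [neZero_iff, ← Measure.measure_univ_ne_zero,
    ← hcoe.hausdorffMeasure_image (.inl (Nat.cast_nonneg _)), image_univ,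
    Subtype.range_coe]
  exact ((measure_ball_pos _ 0 one_pos).trans_le ((measure_mono hproj).trans
    (hausdorffMeasure_orthogonalProjectionOnto_le _ _ _ (Nat.cast_nonneg _)))).ne'

lemma exists_hausdorffMeasure_ball_sphere_lt_top :
    ∃ v : sphere (0 : E) 1, ∃ δ > 0, μH[(dim E - 1 : ℕ)] (ball v δ) < ⊤ := by
  obtain ⟨v, hv⟩ := exists_norm_eq E zero_le_one
  have hv0 : v ≠ 0 := by rintro rfl; simp at hv
  have := isAddHaarMeasure_hausdorffMeasure_orthogonal_singleton hv0
  obtain ⟨K, t, ht, hK⟩ := (contDiffAt_hemisphereGraph_zero v).exists_lipschitzOnWith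
  obtain ⟨δ, hδ, hδt⟩ := Metric.mem_nhds_iff.1 ht
  refine ⟨⟨v, by simp [hv]⟩, min δ 1, lt_min hδ one_pos, ?_⟩
  have hcoe := isometry_subtype_coe (s := sphere (0 : E) 1)
  rw [← hcoe.hausdorffMeasure_image (.inl (Nat.cast_nonneg _)),
    Subtype.image_ball, ofPred_mem_eq]
  have hsub : ball v (min δ 1) ∩ sphere 0 1 ⊆ hemisphereGraph v '' ball 0 δ := by
    rintro p ⟨hpv, hp⟩
    rw [mem_sphere_zero_iff_norm] at hp
    rw [mem_ball, dist_eq_norm, lt_min_iff] at hpv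
    refine ⟨_, ?_, hemisphereGraph_orthogonalProjectionOnto hv hp ?_⟩
    · have hcontr := (ℝ ∙ v)ᗮ.norm_orthogonalProjectionOnto_apply_le (p - v)
      rw [map_sub, Submodule.orthogonalProjectionOnto_orthogonalComplement_singleton_eq_zero,
        sub_zero] at hcontr
      exact mem_ball_zero_iff.2 (hcontr.trans_lt hpv.1)
    · have hexpand := norm_sub_sq_real p v
      rw [hp, hv, real_inner_comm] at hexpand
      nlinarith [norm_nonneg (p - v)]
  exact ((measure_mono hsub).trans ((hK.mono hδt).hausdorffMeasure_image_le
    (Nat.cast_nonneg _))).trans_lt (ENNReal.mul_lt_top (by simp) measure_ball_lt_top)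

instance isFiniteMeasure_hausdorffMeasure_sphere :
    IsFiniteMeasure (μH[(dim E - 1 : ℕ)] : Measure (sphere (0 : E) 1)) :=
  let ⟨_, _, hδ, hfin⟩ := exists_hausdorffMeasure_ball_sphere_lt_top (E := E)
  (isUniformlyDistributed_hausdorffMeasure_sphere (Nat.cast_nonneg _)).isFiniteMeasure hδ hfin

lemma measureReal_hausdorffMeasure_sphere_pos :
    0 < (μH[(dim E - 1 : ℕ)] : Measure (sphere (0 : E) 1)).real univ :=
  measureReal_univ_pos

lemma integral_hausdorffMeasure_unitSphere (f : sphere (0 : E) 1 → ℝ) :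
    ∫ p, f p ∂μH[(dim E - 1 : ℕ)] =
      (μH[(dim E - 1 : ℕ)] : Measure (sphere (0 : E) 1)).real univ *
        ⨍ θ, f θ ∂(volume : Measure E).toSphere := by
  have hprop := congrArg (fun ν : Measure (sphere (0 : E) 1) => ∫ p, f p ∂ν) <|
    (isUniformlyDistributed_hausdorffMeasure_sphere (E := E)
      (Nat.cast_nonneg (dim E - 1))).measure_univ_smul_comm isUniformlyDistributed_toSphere
  have hσ : (volume : Measure E).toSphere.real univ ≠ 0 :=
    measureReal_univ_pos.ne'
  simp only [integral_smul_measure, ← measureReal_def, smul_eq_mul] at hprop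
  rw [average_eq, smul_eq_mul, ← mul_assoc, mul_comm _ _⁻¹, mul_assoc, ← hprop,
    inv_mul_cancel_left₀ hσ]

lemma integral_hausdorffMeasure_sphere (c : E) {R : ℝ} (hR : 0 < R) (f : E → ℝ) :
    ∫ p in sphere c R, f p ∂μH[(dim E - 1 : ℕ)] =
      R ^ (dim E - 1) * (μH[(dim E - 1 : ℕ)] : Measure (sphere (0 : E) 1)).real univ *
        ⨍ θ, f (c + R • (θ : E)) ∂(volume : Measure E).toSphere := by
  have hinj : Function.Injective fun θ : sphere (0 : E) 1 => c + R • (θ : E) :=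
    (add_right_injective c).comp ((smul_right_injective E hR.ne').comp Subtype.val_injective)
  have hemb : MeasurableEmbedding fun θ : sphere (0 : E) 1 => c + R • (θ : E) :=
    (Continuous.isClosedEmbedding (by fun_prop) hinj).measurableEmbedding
  rw [mul_assoc, ← integral_hausdorffMeasure_unitSphere, ← hemb.integral_map,
    map_add_smul_hausdorffMeasure_sphere (Nat.cast_nonneg _) c hR, integral_smul_nnreal_measure,
    NNReal.smul_def, smul_eq_mul, ← mul_assoc]
  simp [abs_of_pos hR, hR.ne']

end SphereMeasure

section PolarCoordinates

lemma ae_toReal_ofReal_pow_smul {α : Type*} [MeasurableSpace α] (μ : Measure α) [SFinite μ]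
    {R₁ R₂ : ℝ} (hR₁ : 0 ≤ R₁) (n : ℕ) (g : α × ℝ → ℝ) :
    (fun p => (ENNReal.ofReal (p.2 ^ n)).toReal • g p)
      =ᵐ[μ.prod (volume.restrict (Ioo R₁ R₂))] fun p => p.2 ^ n * g p := by
  filter_upwards [Measure.quasiMeasurePreserving_snd.ae (ae_restrict_mem measurableSet_Ioo)]
    with p hp
  rw [ENNReal.toReal_ofReal (pow_nonneg (hR₁.trans hp.1.le) _), smul_eq_mul]

variable {E : Type*} [NormedAddCommGroup E] [NormedSpace ℝ E] [FiniteDimensional ℝ E]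
  [MeasurableSpace E] [BorelSpace E] (μ : Measure E) [μ.IsAddHaarMeasure]

lemma map_coe_volumeIoiPow (n : ℕ) :
    (Measure.volumeIoiPow n).map Subtype.val =
      (volume.restrict (Ioi 0)).withDensity fun r : ℝ => ENNReal.ofReal (r ^ n) := by
  ext s hs
  rw [Measure.map_apply measurable_subtype_coe hs, Measure.volumeIoiPow,
    withDensity_apply _ (measurable_subtype_coe hs), withDensity_apply _ hs,
    ← map_comap_subtype_coe measurableSet_Ioi, Measure.restrict_map measurable_subtype_coe hs,
    (MeasurableEmbedding.subtype_coe measurableSet_Ioi).lintegral_map]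

variable [Nontrivial E]

lemma measurePreserving_polar :
    MeasurePreserving (fun p : sphere (0 : E) 1 × ℝ => p.2 • (p.1 : E))
      (μ.toSphere.prod ((volume.restrict (Ioi 0)).withDensity
        fun r : ℝ => ENNReal.ofReal (r ^ (dim E - 1)))) μ := by
  refine ⟨by fun_prop, ?_⟩
  have hpreserving := μ.measurePreserving_homeomorphUnitSphereProd
  have hmeas : Measurable (Prod.map id Subtype.val : sphere (0 : E) 1 × Ioi (0 : ℝ) → _) := by
    fun_prop
  have : SigmaFinite ((Measure.volumeIoiPow (dim E - 1)).map Subtype.val) :=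
    (MeasurableEmbedding.subtype_coe measurableSet_Ioi).sigmaFinite_map
  have hprod : μ.toSphere.prod ((Measure.volumeIoiPow (dim E - 1)).map Subtype.val) =
      (μ.toSphere.prod (Measure.volumeIoiPow (dim E - 1))).map (Prod.map id Subtype.val) := by
    rw [← Measure.map_prod_map _ _ measurable_id measurable_subtype_coe, Measure.map_id]
  have hinverse : (fun p : sphere (0 : E) 1 × ℝ => p.2 • (p.1 : E)) ∘ Prod.map id Subtype.val ∘
      homeomorphUnitSphereProd E = Subtype.val := by
    ext1 x
    simp [show (x : E) ≠ 0 from x.2]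
  rw [← map_coe_volumeIoiPow, hprod, ← hpreserving.map_eq,
    Measure.map_map hmeas hpreserving.measurable, Measure.map_map (by fun_prop)
    (hmeas.comp hpreserving.measurable), hinverse,
    map_comap_subtype_coe (measurableSet_singleton _).compl, restrict_compl_singleton]

lemma measurePreserving_polar_annulus {R₁ R₂ : ℝ} (hR₁ : 0 ≤ R₁) :
    MeasurePreserving (fun p : sphere (0 : E) 1 × ℝ => p.2 • (p.1 : E))
      (μ.toSphere.prod ((volume.restrict (Ioo R₁ R₂)).withDensity
        fun r : ℝ => ENNReal.ofReal (r ^ (dim E - 1))))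
      (μ.restrict (ball 0 R₂ \ closedBall 0 R₁)) := by
  have hA : MeasurableSet (ball (0 : E) R₂ \ closedBall 0 R₁) :=
    measurableSet_ball.diff measurableSet_closedBall
  have hpre : (fun p : sphere (0 : E) 1 × ℝ => p.2 • (p.1 : E)) ⁻¹' (ball 0 R₂ \ closedBall 0 R₁) =
      univ ×ˢ {r : ℝ | R₁ < |r| ∧ |r| < R₂} := by
    ext p
    simp [norm_smul, and_comm]
  have hinter : {r : ℝ | R₁ < |r| ∧ |r| < R₂} ∩ Ioi 0 = Ioo R₁ R₂ := by
    ext r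
    exact ⟨fun ⟨hr, hr0⟩ => by rwa [mem_ofPred_eq, abs_of_pos (mem_Ioi.1 hr0)] at hr,
      fun hr => have hr0 : 0 < r := hR₁.trans_lt hr.1
        ⟨by rwa [mem_ofPred_eq, abs_of_pos hr0], hr0⟩⟩
  have hmeas : MeasurableSet {r : ℝ | R₁ < |r| ∧ |r| < R₂} := by measurability
  have hrestrict := (measurePreserving_polar μ).restrict_preimage hA
  rwa [hpre, ← Measure.prod_restrict, Measure.restrict_univ, restrict_withDensity hmeas,
    Measure.restrict_restrict hmeas, hinter] at hrestrict

variable {μ} {R₁ R₂ : ℝ} {f : E → ℝ}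

lemma integrable_polar_annulus (hR₁ : 0 ≤ R₁)
    (hf : IntegrableOn f (ball 0 R₂ \ closedBall 0 R₁) μ) :
    Integrable (fun p : sphere (0 : E) 1 × ℝ => p.2 ^ (dim E - 1) * f (p.2 • (p.1 : E)))
      (μ.toSphere.prod (volume.restrict (Ioo R₁ R₂))) := by
  have hcomp := (measurePreserving_polar_annulus μ hR₁).integrable_comp_of_integrable hf
  rw [prod_withDensity_right (by fun_prop),
    integrable_withDensity_iff_integrable_smul' (by fun_prop) (by simp)] at hcomp
  exact hcomp.congr (ae_toReal_ofReal_pow_smul _ hR₁ _ _)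

lemma integrable_radialIntegral_annulus (hR₁ : 0 ≤ R₁) (hR : R₁ ≤ R₂)
    (hf : IntegrableOn f (ball 0 R₂ \ closedBall 0 R₁) μ) :
    Integrable (fun θ : sphere (0 : E) 1 =>
      ∫ r in R₁..R₂, r ^ (dim E - 1) * f (r • (θ : E))) μ.toSphere := by
  simp only [intervalIntegral.integral_of_le hR, integral_Ioc_eq_integral_Ioo]
  exact (integrable_polar_annulus hR₁ hf).integral_prod_left

lemma setIntegral_annulus_eq_integral_toSphere (hR₁ : 0 ≤ R₁) (hR : R₁ ≤ R₂)
    (hf : IntegrableOn f (ball 0 R₂ \ closedBall 0 R₁) μ) :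
    ∫ x in ball 0 R₂ \ closedBall 0 R₁, f x ∂μ =
      ∫ θ : sphere (0 : E) 1, (∫ r in R₁..R₂, r ^ (dim E - 1) * f (r • (θ : E))) ∂μ.toSphere := by
  have hpolar := measurePreserving_polar_annulus (R₂ := R₂) μ hR₁
  simp only [intervalIntegral.integral_of_le hR, integral_Ioc_eq_integral_Ioo]
  rw [← integral_prod _ (integrable_polar_annulus hR₁ hf), ← hpolar.map_eq,
    integral_map hpolar.measurable.aemeasurable (by rw [hpolar.map_eq]; exact hf.1),
    prod_withDensity_right (by fun_prop),
    integral_withDensity_eq_integral_toReal_smul (by fun_prop) (by simp)]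
  exact integral_congr_ae (ae_toReal_ofReal_pow_smul _ hR₁ _ _)

lemma setIntegral_annulus_eq_intervalIntegral (hR₁ : 0 ≤ R₁) (hR : R₁ ≤ R₂)
    (hf : IntegrableOn f (ball 0 R₂ \ closedBall 0 R₁) μ) :
    ∫ x in ball 0 R₂ \ closedBall 0 R₁, f x ∂μ =
      ∫ r in R₁..R₂, r ^ (dim E - 1) * ∫ θ : sphere (0 : E) 1, f (r • (θ : E)) ∂μ.toSphere := by
  rw [setIntegral_annulus_eq_integral_toSphere hR₁ hR hf]
  simp only [intervalIntegral.integral_of_le hR, integral_Ioc_eq_integral_Ioo,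
    ← integral_const_mul]
  exact integral_integral_swap (integrable_polar_annulus hR₁ hf)

end PolarCoordinates

section RadialPotential

/-- The primitive `∫_R^r t⁻ᵈ dt` vanishing at `R`. Composed with the norm of a space of dimension
`d + 1` it is the radial harmonic function vanishing on the sphere of radius `R`. -/
noncomputable def radialPotential (d : ℕ) (R r : ℝ) : ℝ := ∫ t in R..r, (t ^ d)⁻¹

variable {d : ℕ} {R r : ℝ}

lemma continuousOn_inv_pow_Ioi (d : ℕ) : ContinuousOn (fun t : ℝ => (t ^ d)⁻¹) (Ioi 0) :=
  (continuousOn_pow d).inv₀ fun _ ht => pow_ne_zero d (mem_Ioi.1 ht).ne'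

lemma intervalIntegrable_inv_pow (d : ℕ) (hR : 0 < R) (hr : 0 < r) :
    IntervalIntegrable (fun t : ℝ => (t ^ d)⁻¹) volume R r :=
  ((continuousOn_inv_pow_Ioi d).mono fun _ ht => (lt_min hR hr).trans_le ht.1).intervalIntegrable

lemma strictAntiOn_sq_inv_pow {d : ℕ} (hd : d ≠ 0) :
    StrictAntiOn (fun r : ℝ => ((r ^ d)⁻¹) ^ 2) (Ioi 0) := fun _ hr _ hs hrs =>
  pow_lt_pow_left₀ (inv_strictAnti₀ (pow_pos hr d) (pow_lt_pow_left₀ hrs (le_of_lt hr) hd))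
    (inv_nonneg.2 (pow_nonneg (le_of_lt hs) d)) two_ne_zero

lemma hasDerivAt_radialPotential (d : ℕ) (hR : 0 < R) (hr : 0 < r) :
    HasDerivAt (radialPotential d R) (r ^ d)⁻¹ r :=
  intervalIntegral.integral_hasDerivAt_right (intervalIntegrable_inv_pow d hR hr)
    ((continuousOn_inv_pow_Ioi d).stronglyMeasurableAtFilter isOpen_Ioi r hr)
    ((continuousOn_inv_pow_Ioi d).continuousAt (Ioi_mem_nhds hr))

lemma contDiffOn_radialPotential (d : ℕ) (hR : 0 < R) :
    ContDiffOn ℝ ∞ (radialPotential d R) (Ioi 0) := by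
  have hderiv : EqOn (deriv (radialPotential d R)) (fun r => (r ^ d)⁻¹) (Ioi 0) := fun r hr =>
    (hasDerivAt_radialPotential d hR hr).deriv
  refine (contDiffOn_infty_iff_deriv_of_isOpen isOpen_Ioi).2 ⟨fun r hr =>
    (hasDerivAt_radialPotential d hR hr).differentiableAt.differentiableWithinAt, ?_⟩
  exact ((contDiff_id.pow d).contDiffOn.inv fun r hr => pow_ne_zero d (mem_Ioi.1 hr).ne').congr
    hderiv

@[simp]
lemma radialPotential_self (d : ℕ) (R : ℝ) : radialPotential d R R = 0 :=
  intervalIntegral.integral_same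

lemma radialPotential_pos (d : ℕ) (hR : 0 < R) (hr : R < r) : 0 < radialPotential d R r :=
  intervalIntegral.intervalIntegral_pos_of_pos_on
    (intervalIntegrable_inv_pow d hR (hR.trans hr))
    (fun _ ht => inv_pos.2 (pow_pos (hR.trans ht.1) d)) hr

end RadialPotential

section TraceInequality

lemma sq_integral_le_integral_inv_mul_integral_mul_sq {α : Type*} [MeasurableSpace α]
    {μ : Measure α} {w f : α → ℝ} (hw : ∀ᵐ x ∂μ, 0 < w x) (hf : Integrable f μ)
    (hwinv : Integrable (fun x => (w x)⁻¹) μ) (hwf : Integrable (fun x => w x * f x ^ 2) μ) :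
    (∫ x, f x ∂μ) ^ 2 ≤ (∫ x, (w x)⁻¹ ∂μ) * ∫ x, w x * f x ^ 2 ∂μ := by
  have hquadratic : ∀ t : ℝ, 0 ≤ (∫ x, (w x)⁻¹ ∂μ) * (t * t) + (-2 * ∫ x, f x ∂μ) * t +
      ∫ x, w x * f x ^ 2 ∂μ := fun t => calc
    0 ≤ ∫ x, (w x)⁻¹ * (t - w x * f x) ^ 2 ∂μ :=
      integral_nonneg_of_ae (hw.mono fun x hx => by positivity)
    _ = ∫ x, (t * t * (w x)⁻¹ + (-2 * t) * f x + w x * f x ^ 2) ∂μ :=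
      integral_congr_ae (hw.mono fun x hx => by field_simp; ring)
    _ = _ := by
      have hsum : Integrable (fun x => t * t * (w x)⁻¹ + (-2 * t) * f x) μ :=
        (hwinv.const_mul _).add (hf.const_mul _)
      rw [integral_add hsum hwf, integral_add (hwinv.const_mul _) (hf.const_mul _),
        integral_const_mul, integral_const_mul]
      ring
  have hdiscrim := discrim_le_zero hquadratic
  rw [discrim] at hdiscrim
  linarith

variable {E : Type*} [NormedAddCommGroup E] [InnerProductSpace ℝ E] {u : E → ℝ} {R₁ R₂ : ℝ}

lemma sq_le_radialPotential_mul_integral [CompleteSpace E] (d : ℕ) (hu : ContDiff ℝ 1 u)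
    (hR₁ : 0 < R₁) (hR : R₁ ≤ R₂) {θ : E} (hθ : ‖θ‖ = 1) (h0 : u (R₁ • θ) = 0) :
    u (R₂ • θ) ^ 2 ≤
      radialPotential d R₁ R₂ * ∫ r in R₁..R₂, r ^ d * ‖gradient u (r • θ)‖ ^ 2 := by
  have hderiv : ∀ r : ℝ, HasDerivAt (fun r : ℝ => u (r • θ)) (fderiv ℝ u (r • θ) θ) r := fun r =>
    ((hu.differentiable one_ne_zero) (r • θ)).hasFDerivAt.comp_hasDerivAt r
      (by simpa using (hasDerivAt_id r).smul_const θ)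
  have : Continuous fun x => fderiv ℝ u x := hu.continuous_fderiv one_ne_zero
  have hle : ∀ r : ℝ, fderiv ℝ u (r • θ) θ ^ 2 ≤ ‖gradient u (r • θ)‖ ^ 2 := fun r => by
    rw [gradient, LinearIsometryEquiv.norm_map, sq_le_sq, abs_norm]
    simpa [hθ] using (fderiv ℝ u (r • θ)).le_opNorm θ
  have hftc : ∫ r in R₁..R₂, fderiv ℝ u (r • θ) θ = u (R₂ • θ) := by
    rw [intervalIntegral.integral_eq_sub_of_hasDerivAt (fun r _ => hderiv r)
      (Continuous.intervalIntegrable (by fun_prop) _ _), h0, sub_zero]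
  have hcauchy : (∫ r in R₁..R₂, fderiv ℝ u (r • θ) θ) ^ 2 ≤
      radialPotential d R₁ R₂ * ∫ r in R₁..R₂, r ^ d * fderiv ℝ u (r • θ) θ ^ 2 := by
    simp only [radialPotential, intervalIntegral.integral_of_le hR]
    exact sq_integral_le_integral_inv_mul_integral_mul_sq
      ((ae_restrict_mem measurableSet_Ioc).mono fun r hr => pow_pos (hR₁.trans hr.1) d)
      (Continuous.intervalIntegrable (by fun_prop) _ _).1
      (intervalIntegrable_inv_pow d hR₁ (hR₁.trans_le hR)).1
      (Continuous.intervalIntegrable (by fun_prop) _ _).1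
  rw [← hftc]
  refine hcauchy.trans (mul_le_mul_of_nonneg_left ?_ (intervalIntegral.integral_nonneg hR
    fun r hr => inv_nonneg.2 (pow_nonneg (hR₁.le.trans hr.1) d)))
  refine intervalIntegral.integral_mono_on hR (Continuous.intervalIntegrable (by fun_prop) _ _)
    (Continuous.intervalIntegrable (by unfold gradient; fun_prop) _ _) fun r hr =>
    mul_le_mul_of_nonneg_left (hle r) (pow_nonneg (hR₁.le.trans hr.1) d)

lemma continuous_gradient [CompleteSpace E] (hu : ContDiff ℝ 1 u) : Continuous (gradient u) :=
  (InnerProductSpace.toDual ℝ E).symm.continuous.comp (hu.continuous_fderiv one_ne_zero)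

lemma integral_sq_le_radialPotential_mul_integral_gradient [FiniteDimensional ℝ E] [Nontrivial E]
    [MeasurableSpace E] [BorelSpace E] (μ : Measure E) [μ.IsAddHaarMeasure] (hu : ContDiff ℝ 1 u)
    (hR₁ : 0 < R₁) (hR : R₁ ≤ R₂) (h0 : ∀ p ∈ sphere (0 : E) R₁, u p = 0) :
    ∫ θ, u (R₂ • (θ : E)) ^ 2 ∂μ.toSphere ≤
      radialPotential (dim E - 1) R₁ R₂ *
        ∫ x in ball 0 R₂ \ closedBall 0 R₁, ‖gradient u x‖ ^ 2 ∂μ := by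
  have hint : IntegrableOn (fun x => ‖gradient u x‖ ^ 2) (ball 0 R₂ \ closedBall 0 R₁) μ :=
    (((continuous_gradient hu).norm.pow 2).continuousOn.integrableOn_compact
      (isCompact_closedBall 0 R₂)).mono_set (sdiff_subset.trans ball_subset_closedBall)
  rw [setIntegral_annulus_eq_integral_toSphere hR₁.le hR hint, ← integral_const_mul]
  refine integral_mono ?_ ((integrable_radialIntegral_annulus hR₁.le hR hint).const_mul _)
    fun θ => sq_le_radialPotential_mul_integral _ hu hR₁ hR (norm_eq_of_mem_sphere θ)
      (h0 _ (by simp [norm_smul, hR₁.le]))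
  have := hu.continuous
  exact Continuous.integrable_of_hasCompactSupport (by fun_prop) (.of_compactSpace _)

end TraceInequality

section DivergenceFree

lemma integral_fderiv_eq_zero {E F : Type*} [NormedAddCommGroup E] [NormedSpace ℝ E]
    [FiniteDimensional ℝ E] [MeasurableSpace E] [BorelSpace E] [NormedAddCommGroup F]
    [NormedSpace ℝ F] [CompleteSpace F] {μ : Measure E} [μ.IsAddHaarMeasure] {V : E → F}
    (hV : ContDiff ℝ 1 V) (hsupp : HasCompactSupport V) : ∫ x, fderiv ℝ V x ∂μ = 0 := by
  have hfderiv : Integrable (fderiv ℝ V) μ :=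
    (hV.continuous_fderiv one_ne_zero).integrable_of_hasCompactSupport (hsupp.fderiv ℝ)
  ext v
  have hv : Integrable (fun x => fderiv ℝ V x v) μ := hfderiv.apply_continuousLinearMap v
  rw [ContinuousLinearMap.integral_apply hfderiv]
  simpa using integral_smul_fderiv_eq_neg_fderiv_smul_of_integrable (μ := μ) (g := V)
    (f := fun _ => (1 : ℝ)) (v := v) (by simp) (by simpa using hv)
    (by simpa using hV.continuous.integrable_of_hasCompactSupport hsupp)
    (fun _ _ => differentiableAt_const 1) (fun x _ => hV.differentiable one_ne_zero x)

variable {E : Type*} [NormedAddCommGroup E] [NormedSpace ℝ E] {U : Set E} {f : E → ℝ} {X : E → E}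

lemma contDiff_smul_of_tsupport_subset (hU : IsOpen U) (hf : ContDiff ℝ 1 f)
    (hfU : tsupport f ⊆ U) (hX : ContDiffOn ℝ 1 X U) : ContDiff ℝ 1 (fun x => f x • X x) :=
  contDiff_iff_contDiffAt.2 fun x => by
    by_cases hx : x ∈ tsupport f
    · exact hf.contDiffAt.smul (hX.contDiffAt (hU.mem_nhds (hfU hx)))
    · exact (contDiffAt_const (c := (0 : E))).congr_of_eventuallyEq
        ((notMem_tsupport_iff_eventuallyEq.1 hx).mono fun y hy => by simp [hy])

lemma integrable_fderiv_apply_of_tsupport_subset [MeasurableSpace E] [BorelSpace E]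
    {μ : Measure E} [IsFiniteMeasureOnCompacts μ] (hU : IsOpen U) (hf : ContDiff ℝ 1 f)
    (hsupp : HasCompactSupport f) (hfU : tsupport f ⊆ U) (hX : ContDiffOn ℝ 1 X U) :
    Integrable (fun x => fderiv ℝ f x (X x)) μ := by
  have hsubset : (Function.support fun x => fderiv ℝ f x (X x)) ⊆ tsupport f := fun x hx => by
    refine support_fderiv_subset ℝ fun h => hx ?_
    simp [h]
  refine Continuous.integrable_of_hasCompactSupport ?_ (hsupp.mono' hsubset)
  refine continuous_of_tsupport fun x hx => ?_
  have hxU := hfU (closure_minimal hsubset isClosed_closure hx)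
  exact (hf.continuous_fderiv one_ne_zero).continuousAt.clm_apply
    (hX.continuousOn.continuousAt (hU.mem_nhds hxU))

variable [FiniteDimensional ℝ E]

lemma trace_fderiv_smul_eq (hU : IsOpen U) (hf : ContDiff ℝ 1 f) (hfU : tsupport f ⊆ U)
    (hX : ContDiffOn ℝ 1 X U) (hdiv : ∀ x ∈ U, LinearMap.trace ℝ E (fderiv ℝ X x) = 0) (x : E) :
    LinearMap.trace ℝ E (fderiv ℝ (fun y => f y • X y) x) = fderiv ℝ f x (X x) := by
  by_cases hx : x ∈ tsupport f
  · have hXx := (hX.contDiffAt (hU.mem_nhds (hfU hx))).differentiableAt one_ne_zero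
    rw [fderiv_fun_smul (hf.differentiable one_ne_zero x) hXx]
    simp [hdiv x (hfU hx)]
  · have hf0 := notMem_tsupport_iff_eventuallyEq.1 hx
    have hfX : (fun y => f y • X y) =ᶠ[𝓝 x] fun _ => 0 :=
      hf0.mono fun y hy => by simp [hy]
    rw [hf0.fderiv_eq, hfX.fderiv_eq]
    simp

variable [MeasurableSpace E] [BorelSpace E] {μ : Measure E}
  [μ.IsAddHaarMeasure]

lemma integral_fderiv_apply_eq_zero_of_trace_eq_zero (hU : IsOpen U) (hf : ContDiff ℝ 1 f)
    (hsupp : HasCompactSupport f) (hfU : tsupport f ⊆ U) (hX : ContDiffOn ℝ 1 X U)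
    (hdiv : ∀ x ∈ U, LinearMap.trace ℝ E (fderiv ℝ X x) = 0) :
    ∫ x, fderiv ℝ f x (X x) ∂μ = 0 := by
  have hV := contDiff_smul_of_tsupport_subset hU hf hfU hX
  have hVsupp : HasCompactSupport fun x => f x • X x := hsupp.smul_right
  let trace : (E →L[ℝ] E) →L[ℝ] ℝ :=
    (LinearMap.trace ℝ E ∘ₗ ContinuousLinearMap.coeLM ℝ).toContinuousLinearMap
  calc ∫ x, fderiv ℝ f x (X x) ∂μ
      = ∫ x, trace (fderiv ℝ (fun y => f y • X y) x) ∂μ :=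
        integral_congr_ae (.of_forall fun x => (trace_fderiv_smul_eq hU hf hfU hX hdiv x).symm)
    _ = trace (∫ x, fderiv ℝ (fun y => f y • X y) x ∂μ) :=
        trace.integral_comp_comm <|
          (hV.continuous_fderiv one_ne_zero).integrable_of_hasCompactSupport (hVsupp.fderiv ℝ)
    _ = 0 := by rw [integral_fderiv_eq_zero hV hVsupp, map_zero]

end DivergenceFree

section SphericalFlux

variable {E : Type*} [NormedAddCommGroup E] [InnerProductSpace ℝ E] {ρ : ℝ}

lemma exists_contDiff_fderiv_eq_smul_innerSL {η : ℝ → ℝ} (hη : Continuous η) (hρ : 0 < ρ)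
    (hsupp : tsupport η ⊆ ball 0 ρ) :
    ∃ f : E → ℝ, ContDiff ℝ 1 f ∧ tsupport f ⊆ ball 0 ρ ∧
      ∀ x, fderiv ℝ f x = (2 * η ‖x‖) • innerSL ℝ x := by
  obtain ⟨r, ⟨hr0, hrρ⟩, hr⟩ := exists_pos_lt_subset_ball hρ (isClosed_tsupport η) hsupp
  have hηr : ∀ t, r ≤ t → η t = 0 := fun t ht => image_eq_zero_of_notMem_tsupport fun h => by
    simpa [abs_of_nonneg (hr0.le.trans ht), ht.not_gt] using hr h
  have hcont : Continuous fun t => η √t := hη.comp Real.continuous_sqrt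
  let f : E → ℝ := fun x => ∫ t in r ^ 2..‖x‖ ^ 2, η √t
  have hf : ∀ x, HasFDerivAt f ((2 * η ‖x‖) • innerSL ℝ x) x := fun x => by
    have hderiv : HasDerivAt (fun s => ∫ t in r ^ 2..s, η √t) (η √(‖x‖ ^ 2)) (‖x‖ ^ 2) :=
      (hcont.integral_hasStrictDerivAt _ _).hasDerivAt
    refine (hderiv.comp_hasFDerivAt x (hasStrictFDerivAt_norm_sq x).hasFDerivAt).congr_fderiv ?_
    rw [Real.sqrt_sq (norm_nonneg x), ← Nat.cast_smul_eq_nsmul ℝ, smul_smul, Nat.cast_ofNat,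
      mul_comm]
  have hfr : ∀ x, r ≤ ‖x‖ → f x = 0 := fun x hx =>
    (intervalIntegral.integral_congr fun t ht => hηr _ <| Real.le_sqrt_of_sq_le <| by
      rw [uIcc_of_le (pow_le_pow_left₀ hr0.le hx 2)] at ht
      exact ht.1).trans intervalIntegral.integral_zero
  refine ⟨f, contDiff_one_iff_fderiv.2 ⟨fun x => (hf x).differentiableAt, ?_⟩, ?_,
    fun x => (hf x).fderiv⟩
  · rw [funext fun x => (hf x).fderiv]
    fun_prop
  · refine (closure_minimal (fun x hx => ?_) isClosed_closedBall).trans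
      (closedBall_subset_ball hrρ)
    exact mem_closedBall_zero_iff.2 (not_lt.1 fun h => hx (hfr x h.le))

variable [FiniteDimensional ℝ E] [MeasurableSpace E] [BorelSpace E] {μ : Measure E}
  [μ.IsAddHaarMeasure] {X : E → E}

lemma continuousOn_integral_inner_sphere (hX : ContinuousOn X (ball 0 ρ)) :
    ContinuousOn (fun r : ℝ => ∫ θ : sphere (0 : E) 1, ⟪(θ : E), X (r • (θ : E))⟫_ℝ ∂μ.toSphere)
      (Ioo 0 ρ) := by
  refine continuousOn_integral_of_compact_support isCompact_univ ?_ (by simp)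
  refine ContinuousOn.inner (𝕜 := ℝ) (by fun_prop) (hX.comp (by fun_prop) fun p hp => ?_)
  simpa [norm_smul, abs_of_pos hp.1.1] using hp.1.2

lemma intervalIntegral_mul_flux_eq_zero [Nontrivial E] (hρ : 0 < ρ)
    (hX : ContDiffOn ℝ 1 X (ball 0 ρ))
    (hdiv : ∀ x ∈ ball 0 ρ, LinearMap.trace ℝ E (fderiv ℝ X x) = 0) {η : ℝ → ℝ}
    (hη : Continuous η) (hsupp : tsupport η ⊆ ball 0 ρ) :
    ∫ r in 0..ρ, η r * (r ^ dim E *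
      ∫ θ : sphere (0 : E) 1, ⟪(θ : E), X (r • (θ : E))⟫_ℝ ∂μ.toSphere) = 0 := by
  obtain ⟨f, hf, hfsupp, hfderiv⟩ :=
    exists_contDiff_fderiv_eq_smul_innerSL (E := E) hη hρ hsupp
  have hfcompact : HasCompactSupport f :=
    (isCompact_closedBall 0 ρ).of_isClosed_subset (isClosed_tsupport f)
      (hfsupp.trans ball_subset_closedBall)
  have hint : Integrable (fun x => fderiv ℝ f x (X x)) μ :=
    integrable_fderiv_apply_of_tsupport_subset isOpen_ball hf hfcompact hfsupp hX
  have hannulus : ∫ x in ball 0 ρ \ closedBall 0 0, fderiv ℝ f x (X x) ∂μ = 0 := by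
    rw [closedBall_zero, setIntegral_congr_set (sdiff_null_ae_eq_self (measure_singleton _)),
      setIntegral_eq_integral_of_forall_compl_eq_zero,
      integral_fderiv_apply_eq_zero_of_trace_eq_zero isOpen_ball hf hfcompact hfsupp hX hdiv]
    intro x hx
    have := (tsupport_fderiv_subset ℝ).trans hfsupp
    rw [image_eq_zero_of_notMem_tsupport fun h => hx (this h)]
    rfl
  have hpolar : ∀ r ∈ uIcc 0 ρ, r ^ (dim E - 1) *
      ∫ θ : sphere (0 : E) 1, fderiv ℝ f (r • (θ : E)) (X (r • (θ : E))) ∂μ.toSphere =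
      2 * (η r * (r ^ dim E *
        ∫ θ : sphere (0 : E) 1, ⟪(θ : E), X (r • (θ : E))⟫_ℝ ∂μ.toSphere)) := fun r hr => by
    rw [uIcc_of_le hρ.le] at hr
    simp only [hfderiv, norm_smul, norm_eq_of_mem_sphere, Real.norm_of_nonneg hr.1, mul_one,
      _root_.smul_apply, innerSL_apply_apply, smul_eq_mul, real_inner_smul_left,
      integral_const_mul]
    rw [← pow_sub_one_mul finrank_pos.ne' r]
    ring
  rw [setIntegral_annulus_eq_intervalIntegral le_rfl hρ.le hint.integrableOn,
    intervalIntegral.integral_congr hpolar, intervalIntegral.integral_const_mul] at hannulus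
  exact (mul_eq_zero.1 hannulus).resolve_left two_ne_zero

lemma integral_inner_sphere_eq_zero [Nontrivial E] (hX : ContDiffOn ℝ 1 X (ball 0 ρ))
    (hdiv : ∀ x ∈ ball 0 ρ, LinearMap.trace ℝ E (fderiv ℝ X x) = 0) {r : ℝ} (hr : r ∈ Ioo 0 ρ) :
    ∫ θ : sphere (0 : E) 1, ⟪(θ : E), X (r • (θ : E))⟫_ℝ ∂μ.toSphere = 0 := by
  set F : ℝ → ℝ := fun r => ∫ θ : sphere (0 : E) 1, ⟪(θ : E), X (r • (θ : E))⟫_ℝ ∂μ.toSphere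
  have hF : ContinuousOn F (Ioo 0 ρ) := continuousOn_integral_inner_sphere hX.continuousOn
  have hcont : ContinuousOn (fun r => r ^ dim E * F r) (Ioo 0 ρ) := by fun_prop
  have hae : ∀ᵐ r, r ∈ Ioo 0 ρ → r ^ dim E * F r = 0 := by
    refine isOpen_Ioo.ae_eq_zero_of_integral_contDiff_smul_eq_zero
      (hcont.locallyIntegrableOn measurableSet_Ioo) fun η hη _ hsupp => ?_
    rw [← intervalIntegral_mul_flux_eq_zero (μ := μ) (hr.1.trans hr.2) hX hdiv hη.continuous
      (hsupp.trans fun t ht => by simpa [abs_of_pos ht.1] using ht.2),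
      intervalIntegral.integral_of_le (hr.1.trans hr.2).le, integral_Ioc_eq_integral_Ioo]
    refine (setIntegral_eq_integral_of_forall_compl_eq_zero fun t ht => ?_).symm
    rw [image_eq_zero_of_notMem_tsupport fun h => ht (hsupp h), zero_smul]
  have heq := Measure.eqOn_Ioo_of_ae_eq volume ((ae_restrict_iff' measurableSet_Ioo).2 hae) hcont
    continuousOn_const hr
  exact (mul_eq_zero.1 heq).resolve_left (pow_pos hr.1 _).ne'

end SphericalFlux

section MeanValueProperty

variable {E : Type*} [NormedAddCommGroup E] [InnerProductSpace ℝ E] [FiniteDimensional ℝ E]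
  {f : E → ℝ} {a : E} {ρ s : ℝ}

lemma trace_fderiv_gradient (f : E → ℝ) (x : E) :
    LinearMap.trace ℝ E (fderiv ℝ (gradient f) x) = Δ f x := by
  have hgradient : ∀ v, fderiv ℝ (gradient f) x v =
      (InnerProductSpace.toDual ℝ E).symm (fderiv ℝ (fderiv ℝ f) x v) :=
    DFunLike.congr_fun (InnerProductSpace.toDual ℝ E).symm.comp_fderiv
  rw [LinearMap.trace_eq_sum_inner _ (stdOrthonormalBasis ℝ E),
    InnerProductSpace.laplacian_eq_iteratedFDeriv_stdOrthonormalBasis]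
  refine Finset.sum_congr rfl fun i _ => ?_
  rw [iteratedFDeriv_two_apply, ContinuousLinearMap.coe_coe, hgradient, real_inner_comm]
  exact InnerProductSpace.toDual_symm_apply

lemma contDiffOn_gradient {m n : WithTop ℕ∞} {U : Set E} (hU : IsOpen U) (hf : ContDiffOn ℝ n f U)
    (hmn : m + 1 ≤ n) : ContDiffOn ℝ m (gradient f) U :=
  (InnerProductSpace.toDual ℝ E).symm.contDiff.comp_contDiffOn
    (hf.fderiv_of_isOpen hU hmn)

lemma integral_inner_gradient_eq_sub {U : Set E} (hU : IsOpen U) (hf : ContDiffOn ℝ 1 f U)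
    {v : E} (hs : 0 ≤ s) (hmem : ∀ r ∈ Icc 0 s, a + r • v ∈ U) :
    ∫ r in 0..s, ⟪v, gradient f (a + r • v)⟫_ℝ = f (a + s • v) - f a := by
  rw [intervalIntegral.integral_eq_sub_of_hasDerivAt (f := fun r => f (a + r • v))]
  · simp
  · intro r hr
    rw [uIcc_of_le hs] at hr
    have hline : HasDerivAt (fun r : ℝ => a + r • v) v r := by
      simpa using ((hasDerivAt_id r).smul_const v).const_add a
    have hfr : HasGradientAt f (gradient f (a + r • v)) (a + r • v) :=
      ((hf.contDiffAt (hU.mem_nhds (hmem r hr))).differentiableAt one_ne_zero).hasGradientAt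
    rw [real_inner_comm]
    simpa [Function.comp_def] using hfr.hasFDerivAt.comp_hasDerivAt r hline
  · refine ContinuousOn.intervalIntegrable ?_
    rw [uIcc_of_le hs]
    exact ContinuousOn.inner (𝕜 := ℝ) (by fun_prop)
      ((contDiffOn_gradient hU hf (zero_add 1).le).continuousOn.comp (by fun_prop) hmem)

variable [Nontrivial E] [MeasurableSpace E] [BorelSpace E] {μ : Measure E} [μ.IsAddHaarMeasure]

lemma integral_inner_gradient_sphere_eq_zero
    (hf : InnerProductSpace.HarmonicOnNhd f (ball a ρ)) {r : ℝ} (hr : r ∈ Ioo 0 ρ) :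
    ∫ θ : sphere (0 : E) 1, ⟪(θ : E), gradient f (a + r • (θ : E))⟫_ℝ ∂μ.toSphere = 0 := by
  have hmaps : MapsTo (fun y => a + y) (ball 0 ρ) (ball a ρ) := fun y hy => by
    simpa using hy
  refine integral_inner_sphere_eq_zero (X := fun y => gradient f (a + y)) ?_ (fun y hy => ?_) hr
  · exact (contDiffOn_gradient isOpen_ball hf.contDiffOn one_add_one_eq_two.le).comp
      (by fun_prop) hmaps
  · rw [fderiv_comp_add_left, trace_fderiv_gradient]
    exact (hf _ (hmaps hy)).2.self_of_nhds

lemma average_harmonicOnNhd_sphere_eq (hf : InnerProductSpace.HarmonicOnNhd f (ball a ρ))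
    (hs : s ∈ Ico 0 ρ) :
    ⨍ θ : sphere (0 : E) 1, f (a + s • (θ : E)) ∂μ.toSphere = f a := by
  have hmem : ∀ r ∈ Icc 0 s, ∀ θ : sphere (0 : E) 1, a + r • (θ : E) ∈ ball a ρ :=
    fun r hr θ => by simpa [norm_smul, abs_of_nonneg hr.1] using hr.2.trans_lt hs.2
  have hgradient : ContinuousOn (fun p : ℝ × sphere (0 : E) 1 =>
      ⟪(p.2 : E), gradient f (a + p.1 • (p.2 : E))⟫_ℝ) (Icc 0 s ×ˢ univ) :=
    ContinuousOn.inner (𝕜 := ℝ) (by fun_prop)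
      ((contDiffOn_gradient isOpen_ball hf.contDiffOn one_add_one_eq_two.le).continuousOn.comp
        (by fun_prop) fun p hp => hmem p.1 hp.1 p.2)
  have hintegrable : Integrable (fun p : ℝ × sphere (0 : E) 1 =>
      ⟪(p.2 : E), gradient f (a + p.1 • (p.2 : E))⟫_ℝ)
      ((volume.restrict (uIoc 0 s)).prod μ.toSphere) := by
    have := (hgradient.integrableOn_compact (isCompact_Icc.prod isCompact_univ)
      (μ := volume.prod μ.toSphere)).mono_set
        (prod_mono (uIoc_of_le hs.1 ▸ Ioc_subset_Icc_self) (subset_refl univ))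
    rwa [IntegrableOn, ← Measure.prod_restrict, Measure.restrict_univ] at this
  have hzero : ∫ θ : sphere (0 : E) 1, (f (a + s • (θ : E)) - f a) ∂μ.toSphere = 0 := by
    have hftc := fun θ => integral_inner_gradient_eq_sub isOpen_ball
      (hf.contDiffOn.of_le one_le_two) hs.1 fun r hr => hmem r hr θ
    simp only [← hftc]
    rw [← intervalIntegral_integral_swap hintegrable]
    refine intervalIntegral.integral_zero_ae (.of_forall fun r hr => ?_)
    rw [uIoc_of_le hs.1] at hr
    exact integral_inner_gradient_sphere_eq_zero hf ⟨hr.1, hr.2.trans_lt hs.2⟩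
  have hintegrable_sphere :
      Integrable (fun θ : sphere (0 : E) 1 => f (a + s • (θ : E))) μ.toSphere :=
    Continuous.integrable_of_hasCompactSupport
      (hf.contDiffOn.continuousOn.comp_continuous (by fun_prop) (hmem s (right_mem_Icc.2 hs.1)))
      (.of_compactSpace _)
  rw [integral_sub hintegrable_sphere (integrable_const _), sub_eq_zero] at hzero
  rw [average_eq, hzero, ← average_eq, average_const]

end MeanValueProperty

section RadialFunctions

variable {E : Type*} [NormedAddCommGroup E] [InnerProductSpace ℝ E] {x : E} {g g' : ℝ → ℝ} {b : ℝ}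

lemma hasFDerivAt_comp_norm (hx : x ≠ 0) (hg : HasDerivAt g b ‖x‖) :
    HasFDerivAt (fun y => g ‖y‖) ((b / ‖x‖) • innerSL ℝ x) x := by
  have hnorm : HasFDerivAt (fun y : E => ‖y‖) (‖x‖⁻¹ • innerSL ℝ x) x := by
    have hsqrt := (hasStrictFDerivAt_norm_sq x).hasFDerivAt.sqrt (by simpa using hx)
    simp only [Real.sqrt_sq (norm_nonneg _)] at hsqrt
    refine hsqrt.congr_fderiv ?_
    rw [← Nat.cast_smul_eq_nsmul ℝ, smul_smul, Nat.cast_ofNat]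
    congr 1
    field_simp [norm_ne_zero_iff.2 hx]
  refine (hg.comp_hasFDerivAt x hnorm).congr_fderiv ?_
  rw [smul_smul, div_eq_mul_inv]

lemma hasGradientAt_comp_norm [CompleteSpace E] (hx : x ≠ 0) (hg : HasDerivAt g b ‖x‖) :
    HasGradientAt (fun y => g ‖y‖) ((b / ‖x‖) • x) x := by
  rw [hasGradientAt_iff_hasFDerivAt, map_smul]
  exact hasFDerivAt_comp_norm hx hg

lemma norm_gradient_comp_norm [CompleteSpace E] (hx : x ≠ 0) (hg : HasDerivAt g b ‖x‖) :
    ‖gradient (fun y => g ‖y‖) x‖ = |b| := by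
  rw [(hasGradientAt_comp_norm hx hg).gradient, norm_smul, norm_div, norm_norm,
    div_mul_cancel₀ _ (norm_ne_zero_iff.2 hx), Real.norm_eq_abs]

variable [FiniteDimensional ℝ E]

lemma trace_fderiv_comp_norm_smul (hx : x ≠ 0) (hg : HasDerivAt g b ‖x‖) :
    LinearMap.trace ℝ E (fderiv ℝ (fun y => g ‖y‖ • y) x) = dim E * g ‖x‖ + b * ‖x‖ := by
  have hfderiv : fderiv ℝ (fun y => g ‖y‖ • y) x = _ :=
    ((hasFDerivAt_comp_norm hx hg).fun_smul (hasFDerivAt_id x)).fderiv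
  rw [hfderiv]
  simp only [id_eq, ContinuousLinearMap.toLinearMap_add, ContinuousLinearMap.toLinearMap_smul,
    ContinuousLinearMap.coe_id, ContinuousLinearMap.coe_smulRight,
    ContinuousLinearMap.toLinearMap_innerSL_apply, map_add, map_smul, LinearMap.trace_id,
    smul_eq_mul, LinearMap.trace_smulRight, LinearMap.smul_apply, innerₛₗ_apply_apply,
    real_inner_self_eq_norm_sq]
  field_simp

lemma laplacian_comp_norm (hx : x ≠ 0) (hg : ∀ r, 0 < r → HasDerivAt g (g' r) r)
    (hg' : HasDerivAt g' b ‖x‖) :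
    Δ (fun y : E => g ‖y‖) x = b + (dim E - 1) / ‖x‖ * g' ‖x‖ := by
  have hx' : ‖x‖ ≠ 0 := norm_ne_zero_iff.2 hx
  have hgradient : gradient (fun y : E => g ‖y‖) =ᶠ[𝓝 x] fun y => (g' ‖y‖ / ‖y‖) • y := by
    filter_upwards [isOpen_ne.mem_nhds hx] with y hy
    exact (hasGradientAt_comp_norm hy (hg _ (norm_pos_iff.2 hy))).gradient
  rw [← trace_fderiv_gradient, hgradient.fderiv_eq,
    trace_fderiv_comp_norm_smul (g := fun r => g' r / r) hx (hg'.div (hasDerivAt_id _) hx')]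
  field_simp
  ring

lemma harmonicOnNhd_radialPotential_norm {R : ℝ} (hR : 0 < R) :
    InnerProductSpace.HarmonicOnNhd (fun x : E => radialPotential (dim E - 1) R ‖x‖) {0}ᶜ := by
  intro x hx
  have hpos : ∀ {y : E}, y ≠ 0 → 0 < ‖y‖ := norm_pos_iff.2
  refine ⟨?_, ?_⟩
  · have := (contDiffOn_radialPotential (dim E - 1) hR).contDiffAt (Ioi_mem_nhds (hpos hx))
    exact (this.of_le (WithTop.coe_le_coe.2 (le_top : (2 : ℕ∞) ≤ ⊤))).comp x (contDiffAt_norm ℝ hx)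
  filter_upwards [isOpen_ne.mem_nhds hx] with y hy
  have : Nontrivial E := ⟨y, 0, hy⟩
  have hpow : HasDerivAt (fun r : ℝ => (r ^ (dim E - 1))⁻¹)
      (-(dim E - 1 : ℕ) * ((‖y‖ ^ (dim E - 1))⁻¹ * ‖y‖⁻¹)) ‖y‖ := by
    have := hasDerivAt_zpow (-(dim E - 1 : ℕ)) ‖y‖ (.inl (hpos hy).ne')
    simpa [zpow_sub_one₀ (hpos hy).ne'] using this
  rw [laplacian_comp_norm hy (fun r => hasDerivAt_radialPotential _ hR) hpow,
    Nat.cast_pred finrank_pos, Pi.zero_apply]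
  ring

end RadialFunctions

section SphericalMeansOfThePotential

variable {E : Type*} [NormedAddCommGroup E] [InnerProductSpace ℝ E] {c : E} {R s : ℝ}

lemma norm_add_smul_eq_norm_div_norm_smul_add_norm_smul (hc : c ≠ 0) (s : ℝ)
    (θ : sphere (0 : E) 1) : ‖c + s • (θ : E)‖ = ‖(s / ‖c‖) • c + ‖c‖ • (θ : E)‖ := by
  have hc' : ‖c‖ ≠ 0 := norm_ne_zero_iff.2 hc
  rw [← sq_eq_sq₀ (norm_nonneg _) (norm_nonneg _), norm_add_sq_real, norm_add_sq_real]
  simp only [norm_smul, norm_eq_of_mem_sphere, real_inner_smul_left, real_inner_smul_right,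
    norm_div, mul_one, Real.norm_eq_abs, mul_pow, div_pow, sq_abs]
  field_simp
  ring

variable [FiniteDimensional ℝ E] [Nontrivial E] [MeasurableSpace E] [BorelSpace E]
  {μ : Measure E} [μ.IsAddHaarMeasure]

lemma average_radialPotential_norm_sphere_of_lt_norm (hR : 0 < R) (hs : s ∈ Ico 0 ‖c‖) :
    ⨍ θ : sphere (0 : E) 1, radialPotential (dim E - 1) R ‖c + s • (θ : E)‖ ∂μ.toSphere =
      radialPotential (dim E - 1) R ‖c‖ := by
  have hball : ball c ‖c‖ ⊆ {0}ᶜ := by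
    rintro x hx rfl
    simp at hx
  exact average_harmonicOnNhd_sphere_eq ((harmonicOnNhd_radialPotential_norm hR).mono hball) hs

lemma average_radialPotential_norm_sphere_of_norm_lt (hR : 0 < R) (hc : ‖c‖ < s) :
    ⨍ θ : sphere (0 : E) 1, radialPotential (dim E - 1) R ‖c + s • (θ : E)‖ ∂μ.toSphere =
      radialPotential (dim E - 1) R s := by
  have hs : 0 < s := (norm_nonneg c).trans_lt hc
  obtain rfl | hc0 := eq_or_ne c 0
  · simp [norm_smul, abs_of_pos hs]
  have hnorm : ‖(s / ‖c‖) • c‖ = s := by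
    rw [norm_smul, norm_div, norm_norm, div_mul_cancel₀ _ (norm_ne_zero_iff.2 hc0),
      Real.norm_of_nonneg hs.le]
  simp only [norm_add_smul_eq_norm_div_norm_smul_add_norm_smul hc0]
  rw [average_radialPotential_norm_sphere_of_lt_norm hR ⟨norm_nonneg c, hnorm.symm ▸ hc⟩, hnorm]

end SphericalMeansOfThePotential

section RadialExtension

variable {E : Type*} [NormedAddCommGroup E] [InnerProductSpace ℝ E] {g : ℝ → ℝ} {R : ℝ}

lemma exists_contDiff_eq_comp_norm (hg : ContDiffOn ℝ ∞ g (Ioi 0)) (hR : 0 < R) :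
    ∃ u : E → ℝ, ContDiff ℝ ∞ u ∧ ∀ x, R ≤ ‖x‖ → u x = g ‖x‖ := by
  let bump : ContDiffBump (0 : E) := ⟨R / 2, R, half_pos hR, half_lt_self hR⟩
  refine ⟨fun x => (1 - bump x) * g ‖x‖, contDiff_iff_contDiffAt.2 fun x => ?_, fun x hx => ?_⟩
  · obtain rfl | hx := eq_or_ne x 0
    · refine (contDiffAt_const (c := (0 : ℝ))).congr_of_eventuallyEq ?_
      filter_upwards [closedBall_mem_nhds (0 : E) (half_pos hR)] with x hx
      rw [bump.one_of_mem_closedBall hx, sub_self, zero_mul]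
    · exact (contDiffAt_const.sub bump.contDiffAt).mul
        ((hg.contDiffAt (Ioi_mem_nhds (norm_pos_iff.2 hx))).comp x (contDiffAt_norm ℝ hx))
  · simp [bump.zero_of_le_dist (x := x) (by simpa using hx)]

variable [CompleteSpace E]

lemma norm_gradient_of_eq_comp_norm {u : E → ℝ} {b : ℝ} {x : E}
    (hR : 0 ≤ R) (hu : ∀ x, R ≤ ‖x‖ → u x = g ‖x‖) (hx : R < ‖x‖) (hg : HasDerivAt g b ‖x‖) :
    ‖gradient u x‖ = |b| := by
  have heq : u =ᶠ[𝓝 x] fun y => g ‖y‖ := by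
    filter_upwards [continuous_norm.continuousAt.eventually (lt_mem_nhds hx)] with y hy
    exact hu y hy.le
  rw [heq.gradient_eq]
  exact norm_gradient_comp_norm (norm_pos_iff.1 (hR.trans_lt hx)) hg

lemma exists_contDiff_eqOn_radialPotential {c : E} {R₁ R₂ : ℝ} (d : ℕ) (hR₁ : 0 < R₁)
    (hsub : closedBall 0 R₁ ⊆ ball c R₂) :
    ∃ u : E → ℝ, ContDiff ℝ ∞ u ∧ (∀ p ∈ sphere (0 : E) R₁, u p = 0) ∧
      EqOn u (fun p => radialPotential d R₁ ‖p‖) (sphere c R₂) ∧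
      EqOn (fun x => ‖gradient u x‖ ^ 2) (fun x => ((‖x‖ ^ d)⁻¹) ^ 2)
        (ball c R₂ \ closedBall 0 R₁) := by
  obtain ⟨u, hu, hu_eq⟩ := exists_contDiff_eq_comp_norm (E := E)
    (contDiffOn_radialPotential d hR₁) hR₁
  refine ⟨u, hu, fun p hp => ?_, fun p hp => hu_eq p ?_, fun x hx => ?_⟩
  · have hp : ‖p‖ = R₁ := mem_sphere_zero_iff_norm.1 hp
    rw [hu_eq p hp.ge, hp, radialPotential_self]
  · by_contra! hlt
    exact (mem_ball.1 (hsub (mem_closedBall_zero_iff.2 hlt.le))).ne hp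
  · have hx : R₁ < ‖x‖ := by simpa using hx.2
    simp only [norm_gradient_of_eq_comp_norm hR₁.le hu_eq hx
      (hasDerivAt_radialPotential _ hR₁ (hR₁.trans hx)), sq_abs]

end RadialExtension

section Bathtub

section SetIntegral

variable {α : Type*} [MeasurableSpace α] {μ : Measure α} {s t : Set α} {f : α → ℝ} {a : ℝ}

lemma measureReal_mul_lt_setIntegral (hs : MeasurableSet s) (hμs : μ s ≠ 0) (hμs' : μ s ≠ ⊤)
    (hf : IntegrableOn f s μ) (h : ∀ x ∈ s, a < f x) : μ.real s * a < ∫ x in s, f x ∂μ := by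
  have hpos : 0 < ∫ x in s, (f x - a) ∂μ := by
    rw [setIntegral_pos_iff_support_of_nonneg_ae
      ((ae_restrict_mem hs).mono fun x hx => (sub_pos.2 (h x hx)).le)
      (hf.sub (integrableOn_const hμs')),
      inter_eq_right.2 fun x hx => Function.mem_support.2 (sub_pos.2 (h x hx)).ne']
    exact pos_iff_ne_zero.2 hμs
  rwa [integral_sub hf (integrableOn_const hμs'), setIntegral_const, smul_eq_mul, sub_pos] at hpos

lemma setIntegral_lt_setIntegral_of_le_of_lt (hs : MeasurableSet s) (ht : MeasurableSet t)
    (hμ : μ s = μ t) (hμs : μ s ≠ ⊤) (hst : μ (t \ s) ≠ 0) (hfs : IntegrableOn f s μ)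
    (hft : IntegrableOn f t μ) (hle : ∀ x ∈ s \ t, f x ≤ a) (hlt : ∀ x ∈ t \ s, a < f x) :
    ∫ x in s, f x ∂μ < ∫ x in t, f x ∂μ := by
  have hμt : μ t ≠ ⊤ := hμ ▸ hμs
  have hsymm : μ.real (s \ t) = μ.real (t \ s) := congrArg ENNReal.toReal <|
    measure_sdiff_symm hs.nullMeasurableSet ht.nullMeasurableSet hμ
      (measure_ne_top_of_subset inter_subset_left hμs)
  have hsdiff : ∫ x in s \ t, f x ∂μ < ∫ x in t \ s, f x ∂μ := calc
    ∫ x in s \ t, f x ∂μ ≤ ∫ _ in s \ t, a ∂μ :=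
      setIntegral_mono_on (hfs.mono_set sdiff_subset)
        (integrableOn_const (measure_ne_top_of_subset sdiff_subset hμs)) (hs.diff ht) hle
    _ = μ.real (t \ s) * a := by rw [setIntegral_const, smul_eq_mul, hsymm]
    _ < ∫ x in t \ s, f x ∂μ :=
      measureReal_mul_lt_setIntegral (ht.diff hs) hst
        (measure_ne_top_of_subset sdiff_subset hμt) (hft.mono_set sdiff_subset) hlt
  rw [← integral_inter_add_sdiff ht hfs, ← integral_inter_add_sdiff hs hft, inter_comm t s]
  gcongr

end SetIntegral

variable {E : Type*} [NormedAddCommGroup E] {c : E} {r R : ℝ} {g : ℝ → ℝ}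

lemma nonempty_ball_sdiff_closedBall [NormedSpace ℝ E] {x y : E} (hxy : x ≠ y) (hR : 0 < R) :
    (ball x R \ closedBall y R).Nonempty := by
  have hdist : 0 < dist y x := dist_pos.2 hxy.symm
  obtain ⟨s, hs, hsR⟩ : ∃ s, max 1 (R / dist y x) < s ∧ s < R / dist y x + 1 :=
    exists_between (max_lt (lt_add_of_pos_left 1 (div_pos hR hdist)) (lt_add_one _))
  obtain ⟨hs1, hs⟩ := max_lt_iff.1 hs
  refine ⟨AffineMap.lineMap y x s, ?_, ?_⟩
  · rw [mem_ball, dist_lineMap_right, Real.norm_eq_abs, abs_sub_comm, abs_of_pos (sub_pos.2 hs1)]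
    exact (lt_div_iff₀ hdist).1 (sub_lt_iff_lt_add.2 hsR)
  · rw [mem_closedBall, dist_lineMap_left, Real.norm_of_nonneg (by linarith), not_le]
    exact (div_lt_iff₀ hdist).1 hs

variable [MeasurableSpace E] [BorelSpace E] [NormedSpace ℝ E] [FiniteDimensional ℝ E]
  {μ : Measure E} [μ.IsAddHaarMeasure]

lemma integrableOn_comp_norm_ball_sdiff_closedBall (hr : 0 < r) (hg : ContinuousOn g (Ioi 0)) :
    IntegrableOn (fun x => g ‖x‖) (ball c R \ closedBall 0 r) μ := by
  refine IntegrableOn.mono_set (t := closedBall c R \ ball 0 r) ?_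
    (sdiff_subset_sdiff ball_subset_closedBall ball_subset_closedBall)
  refine ContinuousOn.integrableOn_compact ((isCompact_closedBall c R).diff isOpen_ball) ?_
  exact hg.comp continuous_norm.continuousOn fun x hx => hr.trans_le (by simpa using hx.2)

lemma setIntegral_comp_norm_ball_sdiff_closedBall_lt (hr : 0 < r) (hrR : r < R) (hc : c ≠ 0)
    (hsub : closedBall 0 r ⊆ ball c R) (hg : ContinuousOn g (Ioi 0))
    (hganti : StrictAntiOn g (Ioi 0)) :
    ∫ x in ball c R \ closedBall 0 r, g ‖x‖ ∂μ < ∫ x in ball 0 R \ closedBall 0 r, g ‖x‖ ∂μ := by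
  have hmeas : ∀ c : E, MeasurableSet (ball c R \ closedBall 0 r) := fun c =>
    measurableSet_ball.diff measurableSet_closedBall
  have hvolume : ∀ c : E, closedBall 0 r ⊆ ball c R → μ (ball c R \ closedBall 0 r) =
      μ (ball 0 R) - μ (closedBall 0 r) := fun c h => by
    rw [measure_sdiff h measurableSet_closedBall.nullMeasurableSet
      (measure_closedBall_lt_top (μ := μ)).ne, Measure.addHaar_ball_center]
  have hR : 0 < R := hr.trans hrR
  refine setIntegral_lt_setIntegral_of_le_of_lt (a := g R) (hmeas c) (hmeas 0) ?_ ?_ ?_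
    (integrableOn_comp_norm_ball_sdiff_closedBall hr hg)
    (integrableOn_comp_norm_ball_sdiff_closedBall hr hg) ?_ ?_
  · rw [hvolume c hsub, hvolume 0 (closedBall_subset_ball hrR)]
  · exact measure_ne_top_of_subset sdiff_subset measure_ball_lt_top.ne
  · have hlens : ball 0 R \ closedBall c R ⊆
        (ball 0 R \ closedBall 0 r) \ (ball c R \ closedBall 0 r) := fun x hx =>
      have hxc : x ∉ ball c R := fun h => hx.2 (ball_subset_closedBall h)
      ⟨⟨hx.1, fun h => hxc (hsub h)⟩, fun h => hxc h.1⟩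
    exact ((isOpen_ball.sdiff isClosed_closedBall).measure_pos μ
      (nonempty_ball_sdiff_closedBall hc.symm hR)).trans_le (measure_mono hlens) |>.ne'
  · rintro x ⟨hxc, hx⟩
    have hxR : R ≤ ‖x‖ := not_lt.1 fun h => hx ⟨mem_ball_zero_iff.2 h, hxc.2⟩
    exact hganti.antitoneOn hR (hR.trans_le hxR) hxR
  · rintro x ⟨hx, -⟩
    have hrx : r < ‖x‖ := by simpa using hx.2
    exact hganti (hr.trans hrx) hR (mem_ball_zero_iff.1 hx.1)

end Bathtub

section SteklovDirichlet

variable {E : Type*} [NormedAddCommGroup E] [InnerProductSpace ℝ E] [FiniteDimensional ℝ E]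
  [Nontrivial E] [MeasurableSpace E] [BorelSpace E] {c : E} {R₁ R₂ : ℝ}

lemma setIntegral_annulus_sq_inv_norm_pow (μ : Measure E) [μ.IsAddHaarMeasure] (hR₁ : 0 < R₁)
    (hR : R₁ ≤ R₂) :
    ∫ x in ball 0 R₂ \ closedBall 0 R₁, ((‖x‖ ^ (dim E - 1))⁻¹) ^ 2 ∂μ =
      μ.toSphere.real univ * radialPotential (dim E - 1) R₁ R₂ := by
  rw [setIntegral_annulus_eq_intervalIntegral hR₁.le hR
    (integrableOn_comp_norm_ball_sdiff_closedBall hR₁ ((continuousOn_inv_pow_Ioi _).fun_pow 2)),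
    radialPotential, ← intervalIntegral.integral_const_mul]
  refine intervalIntegral.integral_congr fun r hr => ?_
  have hr : 0 < r := hR₁.trans_le (uIcc_of_le hR ▸ hr).1
  simp only [norm_smul, norm_eq_of_mem_sphere, mul_one, Real.norm_of_nonneg hr.le, integral_const,
    smul_eq_mul]
  field_simp

lemma sq_radialPotential_le_average_sq {μ : Measure E} [μ.IsAddHaarMeasure] (hR₁ : 0 < R₁)
    (hc : ‖c‖ < R₂) :
    radialPotential (dim E - 1) R₁ R₂ ^ 2 ≤
      ⨍ θ : sphere (0 : E) 1,
        radialPotential (dim E - 1) R₁ ‖c + R₂ • (θ : E)‖ ^ 2 ∂μ.toSphere := by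
  have hR₂ : 0 < R₂ := (norm_nonneg c).trans_lt hc
  have hnorm : ∀ θ : sphere (0 : E) 1, ‖c + R₂ • (θ : E)‖ ∈ Ioi 0 := fun θ => by
    have := norm_sub_le_norm_add (R₂ • (θ : E)) c
    rw [norm_smul, norm_eq_of_mem_sphere, mul_one, Real.norm_of_nonneg hR₂.le, add_comm] at this
    exact (sub_pos.2 hc).trans_le this
  have hcont : Continuous fun θ : sphere (0 : E) 1 =>
      radialPotential (dim E - 1) R₁ ‖c + R₂ • (θ : E)‖ :=
    (contDiffOn_radialPotential _ hR₁).continuousOn.comp_continuous (by fun_prop) hnorm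
  rw [← average_radialPotential_norm_sphere_of_norm_lt (μ := μ) hR₁ hc]
  exact even_two.convexOn_pow.map_average_le (by fun_prop) isClosed_univ (by simp)
    (hcont.integrable_of_hasCompactSupport (.of_compactSpace _))
    ((hcont.pow 2).integrable_of_hasCompactSupport (.of_compactSpace _))

variable (E R₁ R₂) in
/-- The first mixed Steklov–Dirichlet eigenvalue of the concentric annulus with radii `R₁ < R₂`:
the Rayleigh quotient of `radialPotential (dim E - 1) R₁ ‖x‖`. Mathlib's Hausdorff measure is
normalised differently from `Measure.toSphere`, hence the two measures of the unit sphere. -/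
noncomputable def annulusEigenvalue : ℝ :=
  (volume : Measure E).toSphere.real univ /
    (R₂ ^ (dim E - 1) * (μH[(dim E - 1 : ℕ)] : Measure (sphere (0 : E) 1)).real univ *
      radialPotential (dim E - 1) R₁ R₂)

lemma annulusEigenvalue_mul_integral_sq_le {v : E → ℝ} (hv : ContDiff ℝ 1 v) (hR₁ : 0 < R₁)
    (hR : R₁ < R₂) (h0 : ∀ p ∈ sphere (0 : E) R₁, v p = 0) :
    annulusEigenvalue E R₁ R₂ * ∫ p in sphere 0 R₂, v p ^ 2 ∂μH[(dim E - 1 : ℕ)] ≤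
      ∫ x in ball 0 R₂ \ closedBall 0 R₁, ‖gradient v x‖ ^ 2 := by
  have hR₂ : 0 < R₂ := hR₁.trans hR
  have hpotential := radialPotential_pos (dim E - 1) hR₁ hR
  have harea := measureReal_hausdorffMeasure_sphere_pos (E := E)
  have hsphere : 0 < (volume : Measure E).toSphere.real univ := measureReal_univ_pos
  have htrace := integral_sq_le_radialPotential_mul_integral_gradient volume hv hR₁ hR.le h0
  refine le_trans (le_of_eq ?_) ((div_le_iff₀' hpotential).2 htrace)
  rw [integral_hausdorffMeasure_sphere 0 hR₂, annulusEigenvalue, average_eq, smul_eq_mul]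
  simp only [zero_add]
  field_simp

lemma mul_sq_radialPotential_le_integral_sphere (hR₁ : 0 < R₁) (hc : ‖c‖ < R₂) :
    R₂ ^ (dim E - 1) * (μH[(dim E - 1 : ℕ)] : Measure (sphere (0 : E) 1)).real univ *
        radialPotential (dim E - 1) R₁ R₂ ^ 2 ≤
      ∫ p in sphere c R₂, radialPotential (dim E - 1) R₁ ‖p‖ ^ 2 ∂μH[(dim E - 1 : ℕ)] := by
  have hR₂ : 0 < R₂ := (norm_nonneg c).trans_lt hc
  rw [integral_hausdorffMeasure_sphere c hR₂]
  gcongr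
  exact sq_radialPotential_le_average_sq hR₁ hc

lemma setIntegral_sq_inv_norm_pow_lt (hE : 1 < dim E) (hR₁ : 0 < R₁) (hR : R₁ < R₂) (hc : c ≠ 0)
    (hsub : closedBall 0 R₁ ⊆ ball c R₂) :
    ∫ x in ball c R₂ \ closedBall 0 R₁, ((‖x‖ ^ (dim E - 1))⁻¹) ^ 2 <
      annulusEigenvalue E R₁ R₂ *
        ∫ p in sphere c R₂, radialPotential (dim E - 1) R₁ ‖p‖ ^ 2 ∂μH[(dim E - 1 : ℕ)] := by
  have hR₂ : 0 < R₂ := hR₁.trans hR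
  have hpotential := radialPotential_pos (dim E - 1) hR₁ hR
  have harea := measureReal_hausdorffMeasure_sphere_pos (E := E)
  have hcR : ‖c‖ < R₂ := by simpa using hsub (mem_closedBall_self hR₁.le)
  calc ∫ x in ball c R₂ \ closedBall 0 R₁, ((‖x‖ ^ (dim E - 1))⁻¹) ^ 2
    _ < ∫ x in ball (0 : E) R₂ \ closedBall 0 R₁, ((‖x‖ ^ (dim E - 1))⁻¹) ^ 2 :=
      setIntegral_comp_norm_ball_sdiff_closedBall_lt hR₁ hR hc hsub
        ((continuousOn_inv_pow_Ioi _).fun_pow 2) (strictAntiOn_sq_inv_pow (by lia))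
    _ = (volume : Measure E).toSphere.real univ * radialPotential (dim E - 1) R₁ R₂ :=
      setIntegral_annulus_sq_inv_norm_pow volume hR₁ hR.le
    _ = annulusEigenvalue E R₁ R₂ * (R₂ ^ (dim E - 1) *
        (μH[(dim E - 1 : ℕ)] : Measure (sphere (0 : E) 1)).real univ *
          radialPotential (dim E - 1) R₁ R₂ ^ 2) := by
      rw [annulusEigenvalue]
      field_simp
    _ ≤ _ := by
      rw [annulusEigenvalue]
      gcongr
      exact mul_sq_radialPotential_le_integral_sphere hR₁ hcR

end SteklovDirichlet

section FirstEigenvalue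

variable {n : ℕ} {R₁ R₂ : ℝ} {c : EuclideanSpace ℝ (Fin n)}

lemma hausdorffMeasure_natCast_sub_one (hn : 1 ≤ n) :
    (μH[(n : ℝ) - 1] : Measure (EuclideanSpace ℝ (Fin n))) =
      μH[(dim (EuclideanSpace ℝ (Fin n)) - 1 : ℕ)] := by
  rw [finrank_euclideanSpace_fin, Nat.cast_pred hn]

lemma nontrivial_euclideanSpace_fin (hn : 1 ≤ n) : Nontrivial (EuclideanSpace ℝ (Fin n)) :=
  nontrivial_of_finrank_pos (R := ℝ) (by rwa [finrank_euclideanSpace_fin])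

lemma stekDom_eq_ball_sdiff_closedBall (hR₁ : R₁ ≠ 0) :
    stekDom n R₁ R₂ c = ball c R₂ \ closedBall 0 R₁ := by
  rw [stekDom, closure_ball _ hR₁]

lemma tau1_le {u : EuclideanSpace ℝ (Fin n) → ℝ} (hu : ContDiff ℝ ∞ u)
    (hu0 : ∀ p ∈ sphere (0 : EuclideanSpace ℝ (Fin n)) R₁, u p = 0)
    (hu_pos : 0 < ∫ p in sphere c R₂, u p ^ 2 ∂μH[(n : ℝ) - 1]) :
    tau1 n R₁ R₂ c ≤ (∫ x in stekDom n R₁ R₂ c, ‖gradient u x‖ ^ 2) /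
      ∫ p in sphere c R₂, u p ^ 2 ∂μH[(n : ℝ) - 1] :=
  csInf_le ⟨0, by rintro _ ⟨v, -, -, -, rfl⟩; positivity⟩ ⟨u, hu, hu0, hu_pos, rfl⟩

lemma exists_admissible_radialPotential (hn : 1 ≤ n) (hR₁ : 0 < R₁) (hR : R₁ < R₂)
    (hsub : closedBall 0 R₁ ⊆ ball c R₂) :
    ∃ u : EuclideanSpace ℝ (Fin n) → ℝ, ContDiff ℝ ∞ u ∧
      (∀ p ∈ sphere (0 : EuclideanSpace ℝ (Fin n)) R₁, u p = 0) ∧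
      0 < ∫ p in sphere c R₂, u p ^ 2 ∂μH[(n : ℝ) - 1] ∧
      ∫ p in sphere c R₂, u p ^ 2 ∂μH[(n : ℝ) - 1] =
        ∫ p in sphere c R₂, radialPotential (n - 1) R₁ ‖p‖ ^ 2 ∂μH[(n : ℝ) - 1] ∧
      ∫ x in stekDom n R₁ R₂ c, ‖gradient u x‖ ^ 2 =
        ∫ x in ball c R₂ \ closedBall 0 R₁, ((‖x‖ ^ (n - 1))⁻¹) ^ 2 := by
  have := nontrivial_euclideanSpace_fin hn
  obtain ⟨u, hu, hu0, hu_sphere, hu_gradient⟩ :=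
    exists_contDiff_eqOn_radialPotential (n - 1) hR₁ hsub
  have htrace : ∫ p in sphere c R₂, u p ^ 2 ∂μH[(n : ℝ) - 1] =
      ∫ p in sphere c R₂, radialPotential (n - 1) R₁ ‖p‖ ^ 2 ∂μH[(n : ℝ) - 1] :=
    setIntegral_congr_fun isClosed_sphere.measurableSet fun p hp => by simp only [hu_sphere hp]
  have hcR : ‖c‖ < R₂ := by simpa using hsub (mem_closedBall_self hR₁.le)
  have hle := mul_sq_radialPotential_le_integral_sphere hR₁ hcR
  rw [← hausdorffMeasure_natCast_sub_one hn, finrank_euclideanSpace_fin] at hle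
  refine ⟨u, hu, hu0, htrace ▸ lt_of_lt_of_le ?_ hle, htrace, ?_⟩
  · have hR₂ : 0 < R₂ := hR₁.trans hR
    have hpotential := radialPotential_pos (n - 1) hR₁ hR
    have harea := measureReal_hausdorffMeasure_sphere_pos (E := EuclideanSpace ℝ (Fin n))
    rw [finrank_euclideanSpace_fin] at harea
    positivity
  · rw [stekDom_eq_ball_sdiff_closedBall hR₁.ne']
    exact setIntegral_congr_fun (measurableSet_ball.diff measurableSet_closedBall) hu_gradient

lemma annulusEigenvalue_le_tau1 (hn : 1 ≤ n) (hR₁ : 0 < R₁) (hR : R₁ < R₂) :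
    annulusEigenvalue (EuclideanSpace ℝ (Fin n)) R₁ R₂ ≤ tau1 n R₁ R₂ 0 := by
  have := nontrivial_euclideanSpace_fin hn
  obtain ⟨u, hu, hu0, hu_pos, -⟩ :=
    exists_admissible_radialPotential hn hR₁ hR (closedBall_subset_ball hR)
  refine le_csInf ⟨_, u, hu, hu0, hu_pos, rfl⟩ ?_
  rintro _ ⟨v, hv, hv0, hv_pos, rfl⟩
  rw [le_div_iff₀ hv_pos, stekDom_eq_ball_sdiff_closedBall hR₁.ne',
    hausdorffMeasure_natCast_sub_one hn]
  exact annulusEigenvalue_mul_integral_sq_le (hv.of_le (by simp)) hR₁ hR hv0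

lemma tau1_lt_annulusEigenvalue (hn : 2 ≤ n) (hR₁ : 0 < R₁) (hR : R₁ < R₂) (hc : c ≠ 0)
    (hsub : closedBall 0 R₁ ⊆ ball c R₂) :
    tau1 n R₁ R₂ c < annulusEigenvalue (EuclideanSpace ℝ (Fin n)) R₁ R₂ := by
  have hn1 : 1 ≤ n := one_le_two.trans hn
  have := nontrivial_euclideanSpace_fin hn1
  obtain ⟨u, hu, hu0, hu_pos, htrace, henergy⟩ :=
    exists_admissible_radialPotential hn1 hR₁ hR hsub
  have hlt := setIntegral_sq_inv_norm_pow_lt (by rwa [finrank_euclideanSpace_fin]) hR₁ hR hc hsub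
  rw [← hausdorffMeasure_natCast_sub_one hn1, finrank_euclideanSpace_fin] at hlt
  refine (tau1_le hu hu0 hu_pos).trans_lt ?_
  rwa [div_lt_iff₀ hu_pos, henergy, htrace]

lemma stekDom_ne_stekDom_zero (hn : 1 ≤ n) (hR₁ : 0 < R₁) (hR : R₁ < R₂) (hc : c ≠ 0)
    (hsub : closedBall 0 R₁ ⊆ ball c R₂) : stekDom n R₁ R₂ c ≠ stekDom n R₁ R₂ 0 := by
  have := nontrivial_euclideanSpace_fin hn
  intro heq
  rw [stekDom_eq_ball_sdiff_closedBall hR₁.ne', stekDom_eq_ball_sdiff_closedBall hR₁.ne'] at heq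
  have hlt := setIntegral_comp_norm_ball_sdiff_closedBall_lt (μ := volume) hR₁ hR hc hsub
    ((continuousOn_inv_pow_Ioi 1).fun_pow 2) (strictAntiOn_sq_inv_pow one_ne_zero)
  exact hlt.ne (by rw [heq])

end FirstEigenvalue

theorem stmt_8_general (n : ℕ) (hn : 2 ≤ n) (R₁ R₂ : ℝ) (h1 : 0 < R₁) (h12 : R₁ < R₂)
    (c : EuclideanSpace ℝ (Fin n))
    (hsub : closure (Metric.ball (0 : EuclideanSpace ℝ (Fin n)) R₁) ⊆ Metric.ball c R₂) :
    tau1 n R₁ R₂ c ≤ tau1 n R₁ R₂ 0 ∧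
    (tau1 n R₁ R₂ c = tau1 n R₁ R₂ 0 ↔ stekDom n R₁ R₂ c = stekDom n R₁ R₂ 0) := by
  obtain rfl | hc := eq_or_ne c 0
  · simp
  rw [closure_ball _ h1.ne'] at hsub
  have hlt : tau1 n R₁ R₂ c < tau1 n R₁ R₂ 0 :=
    (tau1_lt_annulusEigenvalue hn h1 h12 hc hsub).trans_le
      (annulusEigenvalue_le_tau1 (one_le_two.trans hn) h1 h12)
  exact ⟨hlt.le, iff_of_false hlt.ne
    (stekDom_ne_stekDom_zero (one_le_two.trans hn) h1 h12 hc hsub)⟩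

theorem stmt_8 (n : ℕ) (hn : 3 ≤ n) (R₁ R₂ : ℝ) (h1 : 0 < R₁) (h12 : R₁ < R₂)
    (c : EuclideanSpace ℝ (Fin n))
    (hsub : closure (Metric.ball (0 : EuclideanSpace ℝ (Fin n)) R₁) ⊆ Metric.ball c R₂) :
    tau1 n R₁ R₂ c ≤ tau1 n R₁ R₂ 0 ∧
    (tau1 n R₁ R₂ c = tau1 n R₁ R₂ 0 ↔ stekDom n R₁ R₂ c = stekDom n R₁ R₂ 0) :=
  stmt_8_general n (Nat.le_of_succ_le hn) R₁ R₂ h1 h12 c hsub
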